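/- arXiv:0704.0564 — 3 statements merged into one kernel-verified Lean document; each statement's English description precedes it below -/
import Mathlib

section
/- Let P ∈ ℂ[X₁,…,Xₙ] be a polynomial of degree d. The difference Δ_P(s) := Σ'_{k∈ℤⁿ} P(k)/|k|^s − ∫_{ℝⁿ∖Bⁿ} P(x)/|x|^s dx, which is defined for Re(s) > d + n, extends to a holomorphic (entire) function on the whole complex plane ℂ. -/
open Filter Topology MeasureTheory

noncomputable section

/-- Euclidean norm of an integer vector `k ∈ ℤⁿ`. -/
def znorm {n : ℕ} (k : Fin n → ℤ) : ℝ := Real.sqrt (∑ i, ((k i : ℝ)) ^ 2)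

/-- The general term of the series `Σ'_{k∈ℤⁿ} P(k)/|k|^s`,
with the term at `k = 0` omitted. -/
def zetaPTerm {n : ℕ} (P : MvPolynomial (Fin n) ℂ) (s : ℂ) (k : Fin n → ℤ) : ℂ :=
  if k = 0 then 0 else MvPolynomial.eval (fun i => ((k i : ℤ) : ℂ)) P / ((znorm k : ℂ) ^ s)

section

theorem gauss_bound (k : ℕ) : ∃ C : ℝ, ∀ x : ℝ, |x| ^ k * ‖Complex.exp (-Real.pi * (x : ℂ) ^ 2)‖ ≤ C := by
  refine ⟨1 + k.factorial, fun x => ?_⟩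
  have h1 : ‖Complex.exp (-Real.pi * (x : ℂ) ^ 2)‖ = Real.exp (-Real.pi * x ^ 2) := by
    rw [← Complex.ofReal_pow, ← Complex.ofReal_neg, ← Complex.ofReal_mul, ← Complex.ofReal_exp,
      Complex.norm_real, Real.norm_eq_abs, Real.abs_exp]
  rw [h1]
  have h2 : Real.exp (-Real.pi * x ^ 2) ≤ Real.exp (-(x ^ 2)) := by
    apply Real.exp_le_exp.mpr
    nlinarith [Real.pi_gt_three, sq_nonneg x]
  have h3 : |x| ^ k ≤ 1 + (x ^ 2) ^ k := by
    rw [← sq_abs, ← pow_mul, mul_comm 2 k, pow_mul]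
    nlinarith [sq_nonneg (|x| ^ k - 1)]
  have h4 : (x ^ 2) ^ k ≤ k.factorial * Real.exp (x ^ 2) := by
    have := Real.pow_div_factorial_le_exp (x ^ 2) (sq_nonneg x) k
    rw [div_le_iff₀ (by positivity)] at this
    linarith
  have h5 : (1 : ℝ) ≤ Real.exp (x ^ 2) := Real.one_le_exp (sq_nonneg x)
  calc |x| ^ k * Real.exp (-Real.pi * x ^ 2) 
      ≤ ((1 + k.factorial) * Real.exp (x ^ 2)) * Real.exp (-(x ^ 2)) := by
        apply mul_le_mul _ h2 (by positivity) (by positivity)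
        linarith
    _ = 1 + k.factorial := by
        rw [mul_assoc, ← Real.exp_add]; simp

theorem poly_gauss_bound (k : ℕ) (p : Polynomial ℂ) : ∃ C : ℝ, ∀ x : ℝ,
    |x| ^ k * ‖p.eval (x : ℂ) * Complex.exp (-Real.pi * (x : ℂ) ^ 2)‖ ≤ C := by
  induction p using Polynomial.induction_on' with
  | add p q hp hq =>
    obtain ⟨C, hC⟩ := hp
    obtain ⟨D, hD⟩ := hq
    refine ⟨C + D, fun x => ?_⟩
    rw [Polynomial.eval_add, add_mul]
    calc _ ≤ |x| ^ k * (‖p.eval (x : ℂ) * Complex.exp (-Real.pi * (x : ℂ) ^ 2)‖ +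
            ‖q.eval (x : ℂ) * Complex.exp (-Real.pi * (x : ℂ) ^ 2)‖) := by
          gcongr; exact norm_add_le _ _
      _ ≤ _ := by rw [mul_add]; exact add_le_add (hC x) (hD x)
  | monomial n a =>
    obtain ⟨C, hC⟩ := gauss_bound (k + n)
    refine ⟨‖a‖ * C, fun x => ?_⟩
    rw [Polynomial.eval_monomial, norm_mul, norm_mul, norm_pow, Complex.norm_real, Real.norm_eq_abs]
    calc _ = ‖a‖ * (|x| ^ (k + n) * ‖Complex.exp (-Real.pi * (x : ℂ) ^ 2)‖) := by ring
      _ ≤ _ := by gcongr; exact hC x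

theorem poly_gauss_iteratedDeriv (n : ℕ) : ∀ (p : Polynomial ℂ), ∃ q : Polynomial ℂ,
    iteratedDeriv n (fun x : ℝ => p.eval (x : ℂ) * Complex.exp (-Real.pi * (x : ℂ) ^ 2)) =
     fun x : ℝ => q.eval (x : ℂ) * Complex.exp (-Real.pi * (x : ℂ) ^ 2) := by
  induction n with
  | zero => intro p; exact ⟨p, by simp⟩
  | succ n ih =>
    intro p
    obtain ⟨q, hq⟩ := ih (p.derivative - Polynomial.C (2 * Real.pi : ℂ) * Polynomial.X * p)
    refine ⟨q, ?_⟩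
    rw [iteratedDeriv_succ', ← hq]
    congr 1
    ext x
    have h1 : HasDerivAt (fun x : ℂ => p.eval x * Complex.exp (-Real.pi * x ^ 2))
        (p.derivative.eval (x : ℂ) * Complex.exp (-Real.pi * (x : ℂ) ^ 2) + p.eval (x : ℂ) *
          (Complex.exp (-Real.pi * (x : ℂ) ^ 2) * (-Real.pi * (2 * (x : ℂ))))) (x : ℂ) := by
      apply (p.hasDerivAt _).mul
      apply HasDerivAt.cexp
      apply HasDerivAt.const_mul
      simpa using hasDerivAt_pow 2 (x : ℂ)
    rw [h1.comp_ofReal.deriv]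
    simp
    ring

/-- The Schwartz function `x ^ a * exp (-π x ^ 2)`. -/
noncomputable def gaussS (a : ℕ) : SchwartzMap ℝ ℂ where
  toFun x := (Polynomial.X ^ a : Polynomial ℂ).eval (x : ℂ) * Complex.exp (-Real.pi * (x : ℂ) ^ 2)
  smooth' := by
    have : ContDiff ℝ (⊤ : ℕ∞) (fun x : ℝ => (x : ℂ)) := Complex.ofRealCLM.contDiff
    simp only [Polynomial.eval_pow, Polynomial.eval_X]
    fun_prop
  decay' k n := by
    obtain ⟨q, hq⟩ := poly_gauss_iteratedDeriv n (Polynomial.X ^ a)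
    obtain ⟨C, hC⟩ := poly_gauss_bound k q
    refine ⟨C, fun x => ?_⟩
    rw [norm_iteratedFDeriv_eq_norm_iteratedDeriv, hq]
    exact hC x

theorem gaussS_apply (a : ℕ) (x : ℝ) :
    gaussS a x = (x : ℂ) ^ a * Complex.exp (-Real.pi * (x : ℂ) ^ 2) := by
  change (Polynomial.X ^ a : Polynomial ℂ).eval (x : ℂ) * Complex.exp (-Real.pi * (x : ℂ) ^ 2) = _
  simp

open FourierTransform

theorem fourier_scale (f : ℝ → ℂ) (r : ℝ) (hr : 0 < r) (y : ℝ) :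
    𝓕 (fun x => f (r * x)) y = (r : ℂ)⁻¹ * 𝓕 f (y / r) := by
  rw [Real.fourier_eq', Real.fourier_eq']
  have := Measure.integral_comp_mul_left
    (fun v : ℝ => Complex.exp (↑(-2 * Real.pi * inner ℝ v (y / r)) * Complex.I) • f v) r
  rw [abs_of_pos (inv_pos.mpr hr)] at this
  rw [← Complex.ofReal_inv, ← Complex.real_smul, ← this]
  congr 1; ext v
  simp only [RCLike.inner_apply, conj_trivial]
  congr 5
  field_simp

theorem schwartz_sum (f : SchwartzMap ℝ ℂ) (N : ℕ) : ∃ C : ℝ, ∀ r : ℝ, 0 < r →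
    ‖(∑' k : ℤ, f (r * k)) - (r : ℂ)⁻¹ * ∫ x, f x‖ ≤ C * r ^ (N + 1) := by
  obtain ⟨C, hC⟩ := (𝓕 f).decay' (N + 2) 0
  have hC' : ∀ y : ℝ, |y| ^ (N + 2) * ‖𝓕 f y‖ ≤ C := by
    intro y
    have := hC y
    rw [norm_iteratedFDeriv_zero] at this
    exact this
  have hS : Summable (fun n : ℤ => (|(n : ℝ)| ^ (N + 2))⁻¹) := by
    have := Real.summable_abs_int_rpow (b := ((N + 2 : ℕ) : ℝ)) (by push_cast; linarith [(Nat.cast_nonneg N : (0:ℝ) ≤ N)])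
    refine this.congr fun n => ?_
    rw [Real.rpow_neg (abs_nonneg _), Real.rpow_natCast]
  refine ⟨C * ∑' n : ℤ, (|(n : ℝ)| ^ (N + 2))⁻¹, fun r hr => ?_⟩
  let e : ℝ ≃L[ℝ] ℝ := ContinuousLinearEquiv.smulLeft (Units.mk0 r hr.ne')
  let fr : SchwartzMap ℝ ℂ := SchwartzMap.compCLMOfContinuousLinearEquiv ℂ e f
  have hfr : (fr : ℝ → ℂ) = fun x => f (r * x) := by
    ext x; rfl
  have hP := fr.tsum_eq_tsum_fourier 0
  have hF : ∀ n : ℤ, 𝓕 fr n = (r : ℂ)⁻¹ * 𝓕 f (n / r) := by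
    intro n
    rw [SchwartzMap.fourier_coe, hfr, fourier_scale _ r hr, SchwartzMap.fourier_coe]
  have h0 : 𝓕 f (0 : ℝ) = ∫ x, f x := by
    rw [SchwartzMap.fourier_coe, Real.fourier_eq']
    simp
  let b : ℤ → ℂ := fun n => if n = 0 then 0 else 𝓕 fr n
  have hb : ∀ n, ‖b n‖ ≤ (C * r ^ (N + 1)) * (|(n : ℝ)| ^ (N + 2))⁻¹ := by
    intro n
    by_cases hn : n = 0
    · simp [b, hn]
    · simp only [b, hn, if_false]
      rw [hF, norm_mul, norm_inv, Complex.norm_real, Real.norm_eq_abs, abs_of_pos hr]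
      have h1 := hC' (n / r)
      have h2 : 0 < |(n : ℝ)| := abs_pos.mpr (by exact_mod_cast hn)
      rw [abs_div, abs_of_pos hr, div_pow] at h1
      rw [← div_eq_mul_inv, le_div_iff₀ (by positivity)]
      calc r⁻¹ * ‖𝓕 f (n / r)‖ * |(n : ℝ)| ^ (N + 2)
          = r ^ (N + 1) * (|(n : ℝ)| ^ (N + 2) / r ^ (N + 2) * ‖𝓕 f (n / r)‖) := by
            field_simp
            ring
        _ ≤ r ^ (N + 1) * C := by gcongr
        _ = _ := by ring
  have hbs : Summable b := Summable.of_norm_bounded (hS.mul_left _) hb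
  have hsum := hbs.hasSum.add (hasSum_ite_eq (0 : ℤ) (𝓕 fr (0 : ℝ)))
  have heq : (∑' k : ℤ, f (r * k)) = (∑' n, b n) + (r : ℂ)⁻¹ * ∫ x, f x := by
    have h3 : (∑' n : ℤ, fr (0 + n)) = ∑' k : ℤ, f (r * k) := by
      rw [hfr]; simp
    rw [← h3, hP]
    have h4 : (r : ℂ)⁻¹ * ∫ x, f x = 𝓕 fr (0 : ℝ) := by
      have := hF 0
      simp only [Int.cast_zero, zero_div] at this
      rw [this, h0]
    rw [h4, ← hsum.tsum_eq]
    congr 1; ext n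
    by_cases hn : n = 0
    · simp [b, hn]
    · simp [b, hn]
  rw [heq, add_sub_cancel_right]
  refine (tsum_of_norm_bounded (hS.mul_left _).hasSum hb).trans ?_
  rw [tsum_mul_left]
  apply le_of_eq; ring

end

section

theorem prod_approx {ι : Type*} (s : Finset ι) (u v : ι → ℝ → ℂ) (M : ι → ℝ)
    (hv : ∀ i, v i =O[𝓝[>] (0 : ℝ)] (fun t : ℝ => t ^ (-M i)))
    (huv : ∀ i (x : ℝ), (fun t => u i t - v i t) =O[𝓝[>] (0 : ℝ)] (fun t : ℝ => t ^ x)) :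
    (fun t => ∏ i ∈ s, v i t) =O[𝓝[>] (0 : ℝ)] (fun t : ℝ => t ^ (-∑ i ∈ s, M i)) ∧
    ∀ x : ℝ, (fun t => ∏ i ∈ s, u i t - ∏ i ∈ s, v i t) =O[𝓝[>] (0 : ℝ)] (fun t : ℝ => t ^ x) := by
  classical
  have hadd : ∀ x y : ℝ, (fun t : ℝ => t ^ x * t ^ y) =ᶠ[𝓝[>] (0 : ℝ)] fun t => t ^ (x + y) := by
    intro x y
    filter_upwards [self_mem_nhdsWithin] with t ht
    rw [Real.rpow_add ht]
  induction s using Finset.induction_on with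
  | empty =>
    constructor
    · simp only [Finset.prod_empty, Finset.sum_empty, neg_zero, Real.rpow_zero]
      exact Asymptotics.isBigO_of_le _ (by simp)
    · intro x; simp only [Finset.prod_empty, sub_self]
      exact Asymptotics.isBigO_zero _ _
  | insert a s ha ih =>
    obtain ⟨ih1, ih2⟩ := ih
    simp only [Finset.prod_insert ha, Finset.sum_insert ha]
    constructor
    · rw [neg_add]
      exact ((hv a).mul ih1).trans_eventuallyEq (hadd _ _)
    · intro x
      have e : (fun t => u a t * ∏ i ∈ s, u i t - v a t * ∏ i ∈ s, v i t) = fun t =>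
          ((u a t - v a t) * (∏ i ∈ s, u i t - ∏ i ∈ s, v i t) +
          v a t * (∏ i ∈ s, u i t - ∏ i ∈ s, v i t)) + (u a t - v a t) * ∏ i ∈ s, v i t := by
        ext t; ring
      rw [e]
      refine Asymptotics.IsBigO.add (Asymptotics.IsBigO.add ?_ ?_) ?_
      · have := ((huv a 0).mul (ih2 x)).trans_eventuallyEq (hadd _ _)
        simpa using this
      · have := ((hv a).mul (ih2 (x + M a))).trans_eventuallyEq (hadd _ _)
        simpa using this
      · have := ((huv a (x + ∑ i ∈ s, M i)).mul ih1).trans_eventuallyEq (hadd _ _)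
        simpa using this

theorem hasSum_pi_prod : ∀ (n : ℕ) (f : Fin n → ℤ → ℂ) (_ : ∀ i, Summable (fun k => ‖f i k‖)),
    Summable (fun k : Fin n → ℤ => ‖∏ i, f i (k i)‖) ∧
    HasSum (fun k : Fin n → ℤ => ∏ i, f i (k i)) (∏ i, ∑' k, f i k) := by
  intro n
  induction n with
  | zero =>
    intro f _
    exact ⟨Summable.of_finite, by simpa using hasSum_fintype (fun k : Fin 0 → ℤ => ∏ i, f i (k i))⟩
  | succ n ih =>
    intro f hf
    obtain ⟨h1, h2⟩ := ih (fun i => f i.succ) (fun i => hf _)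
    have h3 := (hf 0).mul_norm h1
    have h5 := summable_mul_of_summable_norm (hf 0) h1
    have h4 : HasSum (fun x : ℤ × (Fin n → ℤ) => f 0 x.1 * ∏ i, f i.succ (x.2 i))
        ((∑' k, f 0 k) * ∏ i, ∑' k, f (Fin.succ i) k) := by
      have h6 : HasSum (f 0) (∑' k, f 0 k) := (hf 0).of_norm.hasSum
      have h7 := h6.mul h2 h5
      exact h7
    let e := Fin.consEquiv (fun _ : Fin (n + 1) => ℤ)
    constructor
    · rw [← e.summable_iff]
      refine h3.congr fun x => ?_
      simp [e, Fin.prod_univ_succ]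
    · rw [← e.hasSum_iff, Fin.prod_univ_succ]
      convert! h4 using 2 with x
      simp [e, Fin.prod_univ_succ]

/-- One-dimensional theta series with monomial weight. -/
noncomputable def th (a : ℕ) (t : ℝ) : ℂ := ∑' k : ℤ, (k : ℂ) ^ a * (Real.exp (-Real.pi * (k : ℝ) ^ 2 * t) : ℂ)

/-- Gaussian moment. -/
noncomputable def cg (a : ℕ) : ℂ := ∫ x : ℝ, (x : ℂ) ^ a * (Real.exp (-Real.pi * x ^ 2) : ℂ)

theorem gaussS_apply' (a : ℕ) (x : ℝ) :
    gaussS a x = (x : ℂ) ^ a * (Real.exp (-Real.pi * x ^ 2) : ℂ) := by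
  rw [gaussS_apply]; push_cast; rfl

theorem th_summable (a : ℕ) (t : ℝ) (ht : 0 < t) :
    Summable (fun k : ℤ => ‖(k : ℂ) ^ a * (Real.exp (-Real.pi * (k : ℝ) ^ 2 * t) : ℂ)‖) := by
  refine (summable_pow_mul_jacobiTheta₂_term_bound 0 ht a).congr fun k => ?_
  rw [norm_mul, norm_pow, Complex.norm_real, Real.norm_eq_abs, Real.abs_exp, Complex.norm_intCast]
  simp only [Int.cast_abs]
  congr 2; ring

theorem th_approx (a : ℕ) (x : ℝ) :
    (fun t => th a t - cg a * ((t ^ (-((a : ℝ) + 1) / 2) : ℝ) : ℂ)) =O[𝓝[>] (0 : ℝ)]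
      (fun t : ℝ => t ^ x) := by
  obtain ⟨N, hN⟩ := exists_nat_ge (2 * x)
  obtain ⟨C, hC⟩ := schwartz_sum (gaussS a) (N + a)
  refine Asymptotics.IsBigO.of_bound |C| ?_
  filter_upwards [Ioo_mem_nhdsGT (zero_lt_one (α := ℝ))] with t ht
  obtain ⟨ht0, ht1⟩ := ht
  set r := Real.sqrt t with hr
  have hr0 : 0 < r := Real.sqrt_pos.mpr ht0
  have hr1 : r ≤ 1 := Real.sqrt_le_one.mpr ht1.le
  have hrt : t = r ^ 2 := (Real.sq_sqrt ht0.le).symm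
  have h1 := hC r hr0
  have h2 : th a t = ((r : ℂ) ^ a)⁻¹ * ∑' k : ℤ, gaussS a (r * k) := by
    rw [th, ← tsum_mul_left]
    congr 1; ext k
    rw [gaussS_apply']
    have : (r : ℂ) ≠ 0 := by exact_mod_cast hr0.ne'
    have e : -Real.pi * (r * (k : ℝ)) ^ 2 = -Real.pi * (k : ℝ) ^ 2 * t := by rw [hrt]; ring
    rw [e]
    push_cast
    field_simp
    rw [mul_pow]
  have h3 : cg a = ∫ x, gaussS a x := by
    simp only [gaussS_apply']; rfl
  have h4 : t ^ (-((a : ℝ) + 1) / 2) = (r ^ (a + 1))⁻¹ := by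
    rw [hrt, ← Real.rpow_natCast r 2, ← Real.rpow_mul hr0.le, ← Real.rpow_natCast r (a + 1),
      ← Real.rpow_neg hr0.le]
    congr 1; push_cast; ring
  have h5 : th a t - cg a * ((t ^ (-((a : ℝ) + 1) / 2) : ℝ) : ℂ) = 
    ((r : ℂ) ^ a)⁻¹ * ((∑' k : ℤ, gaussS a (r * k)) - (r : ℂ)⁻¹ * ∫ x, gaussS a x) := by
    rw [h2, h3, h4]; push_cast; rw [pow_succ, mul_inv]; ring
  rw [h5, norm_mul, norm_inv, norm_pow, Complex.norm_real, Real.norm_eq_abs, abs_of_pos hr0,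
    Real.norm_eq_abs, abs_of_nonneg (Real.rpow_nonneg ht0.le _)]
  calc (r ^ a)⁻¹ * ‖(∑' k : ℤ, gaussS a (r * k)) - (r : ℂ)⁻¹ * ∫ x, gaussS a x‖ 
      ≤ (r ^ a)⁻¹ * (|C| * r ^ (N + a + 1)) := by
        gcongr
        refine h1.trans ?_
        gcongr
        exact le_abs_self C
    _ = |C| * (r ^ (N + 1)) := by field_simp; ring
    _ ≤ |C| * t ^ x := by
        gcongr
        rw [hrt, ← Real.rpow_natCast r 2, ← Real.rpow_mul hr0.le, ← Real.rpow_natCast r (N + 1)]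
        apply Real.rpow_le_rpow_of_exponent_ge hr0 hr1
        push_cast; linarith

end

section

/-- Monomial at an integer vector. -/
noncomputable def am {n : ℕ} (m : Fin n → ℕ) (k : Fin n → ℤ) : ℂ := ∏ i, (k i : ℂ) ^ (m i)

/-- Squared norm of an integer vector. -/
noncomputable def qq {n : ℕ} (k : Fin n → ℤ) : ℝ := ∑ i, (k i : ℝ) ^ 2

/-- Monomial with the term at `0` removed. -/
noncomputable def ap {n : ℕ} (m : Fin n → ℕ) (k : Fin n → ℤ) : ℂ := if k = 0 then 0 else am m k

/-- The theta series without constant term. -/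
noncomputable def FF {n : ℕ} (m : Fin n → ℕ) (t : ℝ) : ℂ := ∏ i, th (m i) t - am m 0

theorem qq_ge_one {n : ℕ} {k : Fin n → ℤ} (hk : k ≠ 0) : 1 ≤ qq k := by
  obtain ⟨i, hi⟩ := Function.ne_iff.mp hk
  have h1 : (1 : ℝ) ≤ (k i : ℝ) ^ 2 := by
    have : (1 : ℤ) ≤ (k i) ^ 2 := by
      have : 0 < (k i) ^ 2 := lt_of_le_of_ne (sq_nonneg _) (pow_ne_zero 2 hi).symm
      omega
    exact_mod_cast this
  exact h1.trans (Finset.single_le_sum (f := fun i => (k i : ℝ) ^ 2) (fun _ _ => sq_nonneg _) (Finset.mem_univ i))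

theorem am_hasSum {n : ℕ} (m : Fin n → ℕ) (t : ℝ) (ht : 0 < t) :
    Summable (fun k : Fin n → ℤ => ‖am m k * (Real.exp (-Real.pi * qq k * t) : ℂ)‖) ∧
    HasSum (fun k : Fin n → ℤ => am m k * (Real.exp (-Real.pi * qq k * t) : ℂ))
      (∏ i, th (m i) t) := by
  have h := hasSum_pi_prod n _ (fun i => th_summable (m i) t ht)
  have e : ∀ k : Fin n → ℤ, ∏ i, ((k i : ℂ) ^ (m i) * (Real.exp (-Real.pi * (k i : ℝ) ^ 2 * t) : ℂ))
      = am m k * (Real.exp (-Real.pi * qq k * t) : ℂ) := by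
    intro k
    rw [Finset.prod_mul_distrib, am, ← Complex.ofReal_prod, ← Real.exp_sum, qq,
      Finset.mul_sum, Finset.sum_mul]
  simp only [e] at h
  exact h

theorem ap_summable {n : ℕ} (m : Fin n → ℕ) (t : ℝ) (ht : 0 < t) :
    Summable (fun k : Fin n → ℤ => ‖ap m k * (Real.exp (-Real.pi * qq k * t) : ℂ)‖) := by
  refine Summable.of_nonneg_of_le (fun _ => norm_nonneg _) (fun k => ?_) (am_hasSum m t ht).1
  by_cases hk : k = 0
  · simp [ap, hk]
  · simp [ap, hk]

theorem ap_hasSum {n : ℕ} (m : Fin n → ℕ) (t : ℝ) (ht : 0 < t) :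
    HasSum (fun k : Fin n → ℤ => ap m k * (Real.exp (-Real.pi * qq k * t) : ℂ)) (FF m t) := by
  have h := (am_hasSum m t ht).2.sub (hasSum_ite_eq (0 : Fin n → ℤ) (am m 0))
  convert! h using 2 with k
  by_cases hk : k = 0
  · simp [ap, hk, qq]
  · simp [ap, hk]

theorem ap_le {n : ℕ} (m : Fin n → ℕ) (s t : ℝ) (hst : s ≤ t) (k : Fin n → ℤ) :
    ‖ap m k * (Real.exp (-Real.pi * qq k * t) : ℂ)‖ ≤ 
      ‖ap m k * (Real.exp (-Real.pi * qq k * s) : ℂ)‖ * Real.exp (-Real.pi * (t - s)) := by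
  by_cases hk : k = 0
  · simp [ap, hk]
  · rw [norm_mul, norm_mul, Complex.norm_real, Complex.norm_real, Real.norm_eq_abs, Real.abs_exp,
      Real.norm_eq_abs, Real.abs_exp, mul_assoc ‖ap m k‖, ← Real.exp_add]
    gcongr
    have := qq_ge_one hk
    nlinarith [Real.pi_pos, mul_nonneg (mul_nonneg Real.pi_pos.le (sub_nonneg.mpr this)) (sub_nonneg.mpr hst)]

theorem FF_continuousOn {n : ℕ} (m : Fin n → ℕ) : ContinuousOn (FF m) (Set.Ioi 0) := by
  intro t ht
  have ht : 0 < t := ht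
  apply ContinuousAt.continuousWithinAt
  have h1 : ContinuousOn (fun t : ℝ => ∑' k : Fin n → ℤ, ap m k * (Real.exp (-Real.pi * qq k * t) : ℂ))
      (Set.Ioi (t / 2)) := by
    refine continuousOn_tsum (u := fun k => ‖ap m k * (Real.exp (-Real.pi * qq k * (t / 2)) : ℂ)‖)
      (fun k => by fun_prop) (ap_summable m _ (by linarith)) ?_
    intro k x hx
    refine (ap_le m (t / 2) x (le_of_lt hx) k).trans ?_
    apply mul_le_of_le_one_right (norm_nonneg _)
    rw [Real.exp_le_one_iff]
    have : t / 2 < x := hx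
    nlinarith [Real.pi_pos]
  have h2 : ContinuousOn (FF m) (Set.Ioi (t / 2)) := by
    refine h1.congr fun x hx => ?_
    have : t / 2 < x := hx
    exact (ap_hasSum m x (by linarith)).tsum_eq.symm
  exact h2.continuousAt (Ioi_mem_nhds (by linarith))

theorem FF_top {n : ℕ} (m : Fin n → ℕ) (x : ℝ) : FF m =O[atTop] (fun t : ℝ => t ^ x) := by
  have h1 : FF m =O[atTop] (fun t : ℝ => Real.exp (-Real.pi * t)) := by
    refine Asymptotics.IsBigO.of_bound ((∑' k, ‖ap m k * (Real.exp (-Real.pi * qq k * 1) : ℂ)‖) * Real.exp Real.pi) ?_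
    filter_upwards [eventually_ge_atTop 1] with t ht
    rw [← (ap_hasSum m t (by linarith)).tsum_eq]
    refine (tsum_of_norm_bounded ((ap_summable m 1 one_pos).hasSum.mul_right _) (ap_le m 1 t ht)).trans ?_
    rw [Real.norm_eq_abs, Real.abs_exp, mul_assoc, ← Real.exp_add]
    apply le_of_eq; congr 2; ring
  exact h1.trans (isLittleO_exp_neg_mul_rpow_atTop Real.pi_pos _).isBigO

theorem FF_mellin {n : ℕ} (m : Fin n → ℕ) : ∃ E : ℂ → ℂ, Differentiable ℂ E ∧
    ∀ s : ℂ, 0 < s.re → ((∑ i, (m i : ℝ)) + n) / 2 < s.re → 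
      mellin (FF m) s = E s + (∏ i, cg (m i)) * (1 / (s - (((∑ i, (m i : ℝ)) + n : ℝ) : ℂ) / 2)) - am m 0 * (1 / s) := by
  set D : ℝ := (∑ i, (m i : ℝ)) + n with hD
  set C := ∏ i, cg (m i) with hC
  let i1 : ℝ → ℂ := Set.indicator (Set.Ioc 0 1) (fun t => (t : ℂ) ^ (-(D : ℂ) / 2))
  let i2 : ℝ → ℂ := Set.indicator (Set.Ioc 0 1) (fun _ => 1)
  let G : ℝ → ℂ := fun t => FF m t - C * i1 t + am m 0 * i2 t
  have hloc : LocallyIntegrableOn G (Set.Ioi 0) := by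
    have hi1 : LocallyIntegrableOn (fun t => C * i1 t) (Set.Ioi 0) := by
      have : LocallyIntegrableOn (fun t : ℝ => (t : ℂ) ^ (-(D : ℂ) / 2)) (Set.Ioi 0) := by
        refine ContinuousOn.locallyIntegrableOn (fun t ht => ?_) measurableSet_Ioi
        apply ContinuousAt.continuousWithinAt
        exact Complex.continuousAt_ofReal_cpow_const _ _ (Or.inr (ne_of_gt ht))
      intro x hx
      obtain ⟨u, hu, hu2⟩ := this x hx
      exact ⟨u, hu, (hu2.indicator measurableSet_Ioc).const_mul C⟩
    have hi2 : LocallyIntegrableOn (fun t => am m 0 * i2 t) (Set.Ioi 0) := by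
      have : LocallyIntegrableOn (fun t : ℝ => (1 : ℂ)) (Set.Ioi 0) := 
        ContinuousOn.locallyIntegrableOn continuousOn_const measurableSet_Ioi
      intro x hx
      obtain ⟨u, hu, hu2⟩ := this x hx
      exact ⟨u, hu, (hu2.indicator measurableSet_Ioc).const_mul (am m 0)⟩
    have hF := (FF_continuousOn m).locallyIntegrableOn measurableSet_Ioi (μ := volume)
    intro x hx
    exact ((hF x hx).sub (hi1 x hx)).add (hi2 x hx)
  have htop : ∀ x : ℝ, G =O[atTop] (fun t : ℝ => t ^ x) := by
    intro x
    refine (FF_top m x).congr' ?_ EventuallyEq.rfl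
    filter_upwards [eventually_gt_atTop 1] with t ht
    simp [G, i1, i2, Set.indicator, not_le.mpr ht]
  have hbot : ∀ x : ℝ, G =O[𝓝[>] (0 : ℝ)] (fun t : ℝ => t ^ x) := by
    intro x
    have h := (prod_approx Finset.univ (fun i => th (m i))
      (fun i t => cg (m i) * ((t ^ (-((m i : ℝ) + 1) / 2) : ℝ) : ℂ)) (fun i => ((m i : ℝ) + 1) / 2)
      (fun i => ?_) (fun i x => th_approx (m i) x)).2 x
    · refine h.congr' ?_ EventuallyEq.rfl
      filter_upwards [Ioc_mem_nhdsGT (zero_lt_one (α := ℝ))] with t ht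
      simp only [G, i1, i2, Set.indicator, ht, if_true, FF]
      rw [Finset.prod_mul_distrib, ← Complex.ofReal_prod, ← Real.rpow_sum_of_pos ht.1]
      have e : ∑ i, (-((m i : ℝ) + 1) / 2) = - D / 2 := by
        rw [← Finset.sum_div, Finset.sum_neg_distrib, Finset.sum_add_distrib]
        simp [hD]
      rw [e, Complex.ofReal_cpow ht.1.le]
      push_cast
      ring
    · apply Asymptotics.IsBigO.of_bound ‖cg (m i)‖
      filter_upwards with t
      rw [norm_mul, Complex.norm_real, neg_div]
  refine ⟨mellin G, fun s => ?_, fun s hs0 hs => ?_⟩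
  · exact mellin_differentiableAt_of_isBigO_rpow hloc (htop (-(s.re + 1))) (by linarith) (hbot (-(s.re - 1))) (by linarith)
  · have hG : MellinConvergent G s := 
      mellinConvergent_of_isBigO_rpow hloc (htop (-(s.re + 1))) (by linarith) (hbot (-(s.re - 1))) (by linarith)
    have h1 := hasMellin_cpow_Ioc (-(D : ℂ) / 2) (s := s) (by
      have : (-(D : ℂ) / 2).re = - D / 2 := by
        rw [← Complex.ofReal_neg]; norm_num
      rw [this]; linarith)
    have h2 := hasMellin_one_Ioc hs0
    have h1' : HasMellin (fun t => C • i1 t) s (C • (1 / (s + -(D : ℂ) / 2))) :=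
      hasMellin_const_smul h1.1 C |>.1 |> fun h => ⟨h, by rw [mellin_const_smul]; rw [h1.2]⟩
    have h2' : HasMellin (fun t => am m 0 • i2 t) s (am m 0 • (1 / s)) :=
      hasMellin_const_smul h2.1 _ |>.1 |> fun h => ⟨h, by rw [mellin_const_smul]; rw [h2.2]⟩
    have h3 := hasMellin_add hG h1'.1
    have h4 := hasMellin_sub h3.1 h2'.1
    have e : (fun t => G t + C • i1 t - am m 0 • i2 t) = FF m := by
      ext t; simp only [G, smul_eq_mul]; ring
    rw [e] at h4
    rw [h4.2, h3.2, h1'.2, h2'.2, smul_eq_mul, smul_eq_mul]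
    congr 5; ring

end

section

theorem summable_qq {n : ℕ} (r : ℝ) (hr : r < -n) :
    Summable (fun k : Fin n → ℤ => (Real.sqrt (qq k)) ^ r) := by
  let b := (EuclideanSpace.basisFun (Fin n) ℝ).toBasis
  let L := Submodule.span ℤ (Set.range b)
  have hfr : Module.finrank ℤ L = n := by
    rw [ZLattice.rank ℝ L]; simp
  have h := ZLattice.summable_norm_rpow L r (by rw [hfr]; exact hr)
  let φ : (Fin n → ℤ) → L := fun k => ∑ i, k i • ⟨b i, Submodule.subset_span ⟨i, rfl⟩⟩
  have hφ : ∀ k i, ((φ k : L) : EuclideanSpace ℝ (Fin n)) i = k i := by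
    intro k i
    simp [φ, b, Finset.sum_apply, Pi.single_apply]
  have hinj : Function.Injective φ := by
    intro k l hkl
    ext i
    have := hφ k i
    rw [hkl, hφ l i] at this
    exact (Int.cast_injective this).symm
  refine (h.comp_injective hinj).congr fun k => ?_
  simp only [Function.comp]
  congr 1
  change ‖((φ k : L) : EuclideanSpace ℝ (Fin n))‖ = _
  rw [EuclideanSpace.norm_eq]
  simp [hφ, qq]

theorem am_norm_le {n : ℕ} (m : Fin n → ℕ) (k : Fin n → ℤ) :
    ‖am m k‖ ≤ (Real.sqrt (qq k)) ^ (∑ i, m i) := by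
  rw [am, norm_prod, ← Finset.prod_pow_eq_pow_sum]
  gcongr with i _
  rw [norm_pow, Complex.norm_intCast]
  gcongr
  apply Real.le_sqrt_of_sq_le
  rw [sq_abs]
  exact (Finset.single_le_sum (f := fun i => (k i : ℝ) ^ 2) (fun _ _ => sq_nonneg _) (Finset.mem_univ i))

theorem ap_dirichlet_summable {n : ℕ} (m : Fin n → ℕ) (x : ℝ) (hx : ((∑ i, (m i : ℝ)) + n) / 2 < x) :
    Summable (fun k : Fin n → ℤ => ‖ap m k‖ / (qq k) ^ x) := by
  refine Summable.of_nonneg_of_le (fun k => ?_) (fun k => ?_)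
    (summable_qq (n := n) ((∑ i, (m i : ℝ)) - 2 * x) (by linarith))
  · have : 0 ≤ qq k := Finset.sum_nonneg fun _ _ => sq_nonneg _
    positivity
  · by_cases hk : k = 0
    · simp only [ap, hk, if_true, norm_zero, zero_div]
      positivity
    · simp only [ap, hk, if_false]
      have h1 : 0 < qq k := lt_of_lt_of_le one_pos (qq_ge_one hk)
      have h2 : 0 < Real.sqrt (qq k) := Real.sqrt_pos.mpr h1
      rw [div_le_iff₀ (by positivity)]
      refine (am_norm_le m k).trans (le_of_eq ?_)
      have h3 : (qq k) ^ x = (Real.sqrt (qq k)) ^ (2 * x) := by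
        rw [Real.rpow_mul h2.le, Real.rpow_two, Real.sq_sqrt h1.le]
      rw [h3, ← Real.rpow_add h2, ← Real.rpow_natCast]
      congr 1; push_cast; ring

theorem dirichlet_hasSum {n : ℕ} (m : Fin n → ℕ) (s : ℂ) (hs0 : 0 < s.re) (hs : (∑ i, (m i : ℝ)) + n < s.re) :
    HasSum (fun k : Fin n → ℤ => ap m k / ((Real.sqrt (qq k) : ℝ) : ℂ) ^ s)
      ((Real.pi : ℂ) ^ (s / 2) * (Complex.Gamma (s / 2))⁻¹ * mellin (FF m) (s / 2)) := by
  have hre : (s / 2).re = s.re / 2 := by simp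
  have h := hasSum_mellin_pi_mul (a := ap m) (q := qq) (F := FF m) (s := s / 2)
    (fun k => by
      by_cases hk : k = 0
      · left; simp [ap, hk]
      · right; exact lt_of_lt_of_le one_pos (qq_ge_one hk)) (by rw [hre]; linarith)
    (fun t ht => ap_hasSum m t ht) (ap_dirichlet_summable m _ (by rw [hre]; linarith))
  have h2 := h.mul_left ((Real.pi : ℂ) ^ (s / 2) * (Complex.Gamma (s / 2))⁻¹)
  convert! h2 using 2 with k
  by_cases hk : k = 0
  · simp [ap, hk]
  have h1 : 0 < qq k := lt_of_lt_of_le one_pos (qq_ge_one hk)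
  have h2 : 0 < Real.sqrt (qq k) := Real.sqrt_pos.mpr h1
  have hG : Complex.Gamma (s / 2) ≠ 0 := Complex.Gamma_ne_zero_of_re_pos (by rw [hre]; linarith)
  have hpi : (Real.pi : ℂ) ^ (s / 2) ≠ 0 := by
    rw [Ne, Complex.cpow_eq_zero_iff]; simp [Real.pi_ne_zero]
  have h3 : ((Real.sqrt (qq k) : ℝ) : ℂ) ^ s = (qq k : ℂ) ^ (s / 2) := by
    have : (qq k : ℂ) = ((Real.sqrt (qq k) : ℝ) : ℂ) ^ ((2 : ℕ) : ℂ) := by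
      rw [Complex.cpow_natCast, ← Complex.ofReal_pow, Real.sq_sqrt h1.le]
    rw [this, Complex.cpow_natCast, ← Complex.cpow_nat_mul' ]
    · congr 1; push_cast; ring
    · rw [Complex.arg_ofReal_of_nonneg h2.le]; simp [Real.pi_pos]
    · rw [Complex.arg_ofReal_of_nonneg h2.le]; simp [Real.pi_pos.le]
  rw [h3, Complex.cpow_neg]
  field_simp

end

section

/-- Monomial at a real vector. -/
noncomputable def pm {n : ℕ} (m : Fin n → ℕ) (x : EuclideanSpace ℝ (Fin n)) : ℂ := ∏ i, ((x i : ℝ) : ℂ) ^ (m i)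

theorem pm_smul {n : ℕ} (m : Fin n → ℕ) (c : ℝ) (x : EuclideanSpace ℝ (Fin n)) :
    pm m (c • x) = (c : ℂ) ^ (∑ i, m i) * pm m x := by
  simp [pm, mul_pow, Finset.prod_mul_distrib, Finset.prod_pow_eq_pow_sum]

theorem pm_continuous {n : ℕ} (m : Fin n → ℕ) : Continuous (pm m) := by
  unfold pm; fun_prop

/-- Integral of a monomial over the sphere. -/
noncomputable def sph {n : ℕ} (m : Fin n → ℕ) : ℂ :=
  ∫ w : Metric.sphere (0 : EuclideanSpace ℝ (Fin n)) 1, pm m w ∂(volume : Measure (EuclideanSpace ℝ (Fin n))).toSphere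

theorem pm_polar {n : ℕ} (m : Fin n → ℕ) (φ : ℝ → ℂ)
    (x : ({0}ᶜ : Set (EuclideanSpace ℝ (Fin n)))) :
    pm m x * φ ‖(x : EuclideanSpace ℝ (Fin n))‖ = 
    (fun p : Metric.sphere (0 : EuclideanSpace ℝ (Fin n)) 1 × Set.Ioi (0 : ℝ) =>
      pm m p.1 * (((p.2 : ℝ) : ℂ) ^ (∑ i, m i) * φ p.2)) (homeomorphUnitSphereProd _ x) := by
  have hx : (x : EuclideanSpace ℝ (Fin n)) ≠ 0 := x.2
  have hx' : (‖(x : EuclideanSpace ℝ (Fin n))‖ : ℂ) ≠ 0 := by simpa using hx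
  simp only [homeomorphUnitSphereProd_apply_snd_coe, homeomorphUnitSphereProd_apply_fst_coe]
  rw [pm_smul]
  push_cast
  rw [inv_pow]
  field_simp

theorem polar_integral {n : ℕ} (hn : 0 < n) (m : Fin n → ℕ) (φ : ℝ → ℂ) :
    ∫ x : EuclideanSpace ℝ (Fin n), pm m x * φ ‖x‖ =
      sph m * ∫ y in Set.Ioi (0 : ℝ), (y : ℂ) ^ (n - 1) * ((y : ℂ) ^ (∑ i, m i) * φ y) := by
  have : Nonempty (Fin n) := ⟨⟨0, hn⟩⟩
  have hdim : Module.finrank ℝ (EuclideanSpace ℝ (Fin n)) = n := by simp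
  calc ∫ x : EuclideanSpace ℝ (Fin n), pm m x * φ ‖x‖
      = ∫ x : ({0}ᶜ : Set (EuclideanSpace ℝ (Fin n))), pm m x * φ ‖x.1‖ ∂((volume : Measure (EuclideanSpace ℝ (Fin n))).comap Subtype.val) := by
        rw [integral_subtype_comap (measurableSet_singleton _).compl fun x ↦ pm m x * φ ‖x‖,
          restrict_compl_singleton]
    _ = ∫ p, pm m p.1 * (((p.2 : ℝ) : ℂ) ^ (∑ i, m i) * φ p.2)
          ∂((volume : Measure (EuclideanSpace ℝ (Fin n))).toSphere.prod (.volumeIoiPow (n - 1))) := by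
        have := (volume : Measure (EuclideanSpace ℝ (Fin n))).measurePreserving_homeomorphUnitSphereProd.integral_comp
          (Homeomorph.measurableEmbedding _) (fun p => pm m p.1 * (((p.2 : ℝ) : ℂ) ^ (∑ i, m i) * φ p.2))
        rw [hdim] at this
        rw [← this]
        congr 1; ext x
        exact pm_polar m φ x
    _ = sph m * ∫ y : Set.Ioi (0 : ℝ), ((y : ℝ) : ℂ) ^ (∑ i, m i) * φ y ∂(.volumeIoiPow (n - 1)) := 
        integral_prod_mul (fun w : Metric.sphere (0 : EuclideanSpace ℝ (Fin n)) 1 => pm m w)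
          (fun y : Set.Ioi (0 : ℝ) => ((y : ℝ) : ℂ) ^ (∑ i, m i) * φ y)
    _ = _ := by
        congr 1
        simp only [Measure.volumeIoiPow, ENNReal.ofReal]
        rw [integral_withDensity_eq_integral_smul,
          integral_subtype_comap measurableSet_Ioi fun a : ℝ ↦ Real.toNNReal (a ^ (n - 1)) • ((a : ℂ) ^ (∑ i, m i) * φ a)]
        · refine setIntegral_congr_fun measurableSet_Ioi fun x hx ↦ ?_
          rw [NNReal.smul_def, Real.coe_toNNReal _ (pow_nonneg (le_of_lt hx) _), Complex.real_smul]
          push_cast; rfl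
        · exact (measurable_subtype_coe.pow_const _).real_toNNReal

theorem polar_integrable {n : ℕ} (hn : 0 < n) (m : Fin n → ℕ) (φ : ℝ → ℂ)
    (h : IntegrableOn (fun y : ℝ => (y : ℂ) ^ (n - 1) * ((y : ℂ) ^ (∑ i, m i) * φ y)) (Set.Ioi 0)) :
    Integrable (fun x : EuclideanSpace ℝ (Fin n) => pm m x * φ ‖x‖) := by
  have : Nonempty (Fin n) := ⟨⟨0, hn⟩⟩
  have hdim : Module.finrank ℝ (EuclideanSpace ℝ (Fin n)) = n := by simp
  have h1 : Integrable (fun y : Set.Ioi (0 : ℝ) => ((y : ℝ) : ℂ) ^ (∑ i, m i) * φ y) (.volumeIoiPow (n - 1)) := by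
    rw [integrableOn_iff_comap_subtypeVal measurableSet_Ioi] at h
    rw [Measure.volumeIoiPow, integrable_withDensity_iff_integrable_smul' (by fun_prop) (by simp)]
    refine h.congr (.of_forall ?_)
    rintro ⟨x, hx : 0 < x⟩
    simp only [Function.comp]
    rw [ENNReal.toReal_ofReal (by positivity), Complex.real_smul]
    push_cast; rfl
  have h2 : Integrable (fun w : Metric.sphere (0 : EuclideanSpace ℝ (Fin n)) 1 => pm m w)
      (volume : Measure (EuclideanSpace ℝ (Fin n))).toSphere := by
    have hc : Continuous (fun w : Metric.sphere (0 : EuclideanSpace ℝ (Fin n)) 1 => pm m w) :=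
      (pm_continuous m).comp continuous_subtype_val
    have := hc.continuousOn.integrableOn_compact (isCompact_univ)
      (μ := (volume : Measure (EuclideanSpace ℝ (Fin n))).toSphere)
    rwa [integrableOn_univ] at this
  have h3 := h2.mul_prod h1
  have h4 := ((volume : Measure (EuclideanSpace ℝ (Fin n))).measurePreserving_homeomorphUnitSphereProd.integrable_comp_emb
          (Homeomorph.measurableEmbedding _) (g := fun p => pm m p.1 * (((p.2 : ℝ) : ℂ) ^ (∑ i, m i) * φ p.2)))
  rw [hdim] at h4
  have h5 := h4.mpr h3
  rw [← restrict_compl_singleton (μ := volume) (0 : EuclideanSpace ℝ (Fin n)), ← IntegrableOn,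
    integrableOn_iff_comap_subtypeVal (measurableSet_singleton _).compl]
  refine h5.congr (.of_forall fun x => ?_)
  exact (pm_polar m φ x).symm

end

theorem prod_cg {n : ℕ} (hn : 0 < n) (m : Fin n → ℕ) :
    ∏ i, cg (m i) = sph m * ((Real.pi : ℂ) ^ (-((((∑ i, (m i : ℝ)) + n : ℝ) : ℂ) / 2)) * (1 / 2) *
      Complex.Gamma ((((∑ i, (m i : ℝ)) + n : ℝ) : ℂ) / 2)) := by
  have h1 := polar_integral hn m (fun y => (Real.exp (-Real.pi * y ^ 2) : ℂ))
  have h2 : ∫ x : EuclideanSpace ℝ (Fin n), pm m x * (Real.exp (-Real.pi * ‖x‖ ^ 2) : ℂ) =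
      ∏ i, cg (m i) := by
    have h3 := integral_fintype_prod_volume_eq_prod (E := fun _ : Fin n => ℝ)
      (fun i (x : ℝ) => (x : ℂ) ^ (m i) * (Real.exp (-Real.pi * x ^ 2) : ℂ))
    have h4 : ∏ i, cg (m i) = ∏ i, ∫ x : ℝ, (x : ℂ) ^ (m i) * (Real.exp (-Real.pi * x ^ 2) : ℂ) := rfl
    rw [h4, ← h3]
    rw [← (PiLp.volume_preserving_ofLp (Fin n)).integral_comp
      (MeasurableEquiv.toLp 2 (Fin n → ℝ)).symm.measurableEmbedding]
    congr 1; ext x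
    rw [Finset.prod_mul_distrib, ← Complex.ofReal_prod, ← Real.exp_sum, ← Finset.mul_sum, pm,
      EuclideanSpace.norm_sq_eq]
    simp
  rw [← h2, h1]
  congr 1
  set d := ∑ i, m i with hd
  have hd' : (∑ i, (m i : ℝ)) = d := by simp [hd]
  rw [hd']
  have hn' : ((n - 1 : ℕ) : ℝ) = n - 1 := by
    rw [Nat.cast_sub hn]; simp
  have hnp : (0 : ℝ) < n := by exact_mod_cast hn
  have hdp : (0 : ℝ) ≤ d := Nat.cast_nonneg d
  have h5 := integral_rpow_mul_exp_neg_mul_rpow (p := 2) (q := (n : ℝ) - 1 + d) (b := Real.pi)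
    two_pos (by linarith) Real.pi_pos
  have h6 : ∫ y in Set.Ioi (0 : ℝ), (y : ℂ) ^ (n - 1) * ((y : ℂ) ^ d * (Real.exp (-Real.pi * y ^ 2) : ℂ)) =
      ((∫ y in Set.Ioi (0 : ℝ), y ^ ((n : ℝ) - 1 + d) * Real.exp (-Real.pi * y ^ (2 : ℝ)) : ℝ) : ℂ) := by
    rw [← integral_complex_ofReal]
    refine setIntegral_congr_fun measurableSet_Ioi fun y hy => ?_
    have hy : 0 < y := hy
    have : y ^ ((n : ℝ) - 1 + d) = y ^ (n - 1) * y ^ d := by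
      rw [Real.rpow_add hy, Real.rpow_natCast, ← hn', Real.rpow_natCast]
    simp only [this, Real.rpow_two]
    push_cast; ring
  rw [h6, h5]
  have e1 : (n : ℝ) - 1 + d + 1 = d + n := by ring
  rw [e1]
  push_cast [Complex.ofReal_cpow Real.pi_pos.le, ← Complex.Gamma_ofReal]
  rw [neg_div]

theorem ext_integral {n : ℕ} (hn : 0 < n) (m : Fin n → ℕ) (s : ℂ) (hs : (∑ i, (m i : ℝ)) + n < s.re) :
    IntegrableOn (fun x : EuclideanSpace ℝ (Fin n) => pm m x / ((‖x‖ : ℂ) ^ s))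
      (Metric.closedBall (0 : EuclideanSpace ℝ (Fin n)) 1)ᶜ ∧
    ∫ x in (Metric.closedBall (0 : EuclideanSpace ℝ (Fin n)) 1)ᶜ, pm m x / ((‖x‖ : ℂ) ^ s) =
      sph m / (s - (((∑ i, (m i : ℝ)) + n : ℝ) : ℂ)) := by
  set d := ∑ i, m i with hd
  have hd' : (∑ i, (m i : ℝ)) = d := by simp [hd]
  rw [hd'] at hs ⊢
  let φ : ℝ → ℂ := Set.indicator (Set.Ioi 1) (fun y => ((y : ℂ) ^ s)⁻¹)
  have hmeas : MeasurableSet (Metric.closedBall (0 : EuclideanSpace ℝ (Fin n)) 1)ᶜ :=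
    Metric.isClosed_closedBall.measurableSet.compl
  have e1 : (Metric.closedBall (0 : EuclideanSpace ℝ (Fin n)) 1)ᶜ.indicator
      (fun x : EuclideanSpace ℝ (Fin n) => pm m x / ((‖x‖ : ℂ) ^ s)) = fun x => pm m x * φ ‖x‖ := by
    ext x
    by_cases hx : 1 < ‖x‖
    · have : x ∈ (Metric.closedBall (0 : EuclideanSpace ℝ (Fin n)) 1)ᶜ := by simpa using hx
      rw [Set.indicator_of_mem this]
      simp only [φ]
      rw [Set.indicator_of_mem (show ‖x‖ ∈ Set.Ioi (1 : ℝ) from hx), div_eq_mul_inv]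
    · have : x ∉ (Metric.closedBall (0 : EuclideanSpace ℝ (Fin n)) 1)ᶜ := by simpa using hx
      rw [Set.indicator_of_notMem this]
      simp only [φ]
      rw [Set.indicator_of_notMem (show ‖x‖ ∉ Set.Ioi (1 : ℝ) from hx), mul_zero]
  have hn' : ((n - 1 : ℕ) : ℂ) = n - 1 := by
    rw [Nat.cast_sub hn]; simp
  have e2 : (fun y : ℝ => (y : ℂ) ^ (n - 1) * ((y : ℂ) ^ d * φ y)) =
      Set.indicator (Set.Ioi 1) (fun y : ℝ => (y : ℂ) ^ ((n : ℂ) - 1 + d - s)) := by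
    ext y
    by_cases hy : y ∈ Set.Ioi (1 : ℝ)
    · simp only [φ]
      rw [Set.indicator_of_mem hy, Set.indicator_of_mem hy]
      have hy0 : (y : ℂ) ≠ 0 := by
        have : (1 : ℝ) < y := hy
        exact_mod_cast (by linarith : (0 : ℝ) < y).ne'
      rw [Complex.cpow_sub _ _ hy0, Complex.cpow_add _ _ hy0, ← hn', Complex.cpow_natCast, Complex.cpow_natCast]
      ring
    · simp only [φ]
      rw [Set.indicator_of_notMem hy, Set.indicator_of_notMem hy]
      simp
  have hre : ((n : ℂ) - 1 + d - s).re < -1 := by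
    simp; linarith
  have hI := integrableOn_Ioi_cpow_of_lt hre one_pos
  have hsub : Set.Ioi (0 : ℝ) ∩ Set.Ioi 1 = Set.Ioi 1 := by
    exact Set.inter_eq_right.mpr (Set.Ioi_subset_Ioi zero_le_one)
  constructor
  · rw [← integrable_indicator_iff hmeas, e1]
    apply polar_integrable hn m φ
    rw [e2]
    have := hI.integrable_indicator measurableSet_Ioi
    exact this.integrableOn
  · rw [← integral_indicator hmeas, e1, polar_integral hn m φ, e2, setIntegral_indicator measurableSet_Ioi,
      hsub, integral_Ioi_cpow_of_lt hre one_pos]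
    rw [Complex.ofReal_one, Complex.one_cpow]
    have : (n : ℂ) - 1 + d - s + 1 = -(s - ((d + n : ℝ) : ℂ)) := by push_cast; ring
    rw [this, neg_div_neg_eq, mul_one_div]

theorem mono_main {n : ℕ} (m : Fin n → ℕ) : ∃ g : ℂ → ℂ, Differentiable ℂ g ∧
    ∀ s : ℂ, (∑ i, (m i : ℝ)) + n < s.re → 
      Summable (fun k : Fin n → ℤ => ap m k / ((znorm k : ℂ) ^ s)) ∧
      IntegrableOn (fun x : EuclideanSpace ℝ (Fin n) => pm m x / ((‖x‖ : ℂ) ^ s))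
        (Metric.closedBall (0 : EuclideanSpace ℝ (Fin n)) 1)ᶜ ∧
      g s = (∑' k : Fin n → ℤ, ap m k / ((znorm k : ℂ) ^ s)) -
        ∫ x in (Metric.closedBall (0 : EuclideanSpace ℝ (Fin n)) 1)ᶜ, pm m x / ((‖x‖ : ℂ) ^ s) := by
  rcases Nat.eq_zero_or_pos n with hn | hn
  · subst hn
    refine ⟨fun _ => 0, differentiable_const _, fun s _ => ?_⟩
    have h1 : (fun k : Fin 0 → ℤ => ap m k / ((znorm k : ℂ) ^ s)) = fun _ => 0 := by
      ext k
      have : k = 0 := Subsingleton.elim _ _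
      simp [ap, this]
    have h2 : (Metric.closedBall (0 : EuclideanSpace ℝ (Fin 0)) 1)ᶜ = ∅ := by
      ext x
      have : x = 0 := Subsingleton.elim _ _
      simp [this]
    rw [h1, h2]
    simp [summable_zero]
  obtain ⟨E, hE, hE2⟩ := FF_mellin m
  have hC := prod_cg hn m
  have hI := ext_integral hn m
  have hnp : (0 : ℝ) < n := by exact_mod_cast hn
  have hsum : 0 ≤ ∑ i, (m i : ℝ) := Finset.sum_nonneg fun _ _ => Nat.cast_nonneg _
  set D : ℝ := (∑ i, (m i : ℝ)) + n with hD
  have hDp : 0 < D := by linarith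
  set C := ∏ i, cg (m i) with hCdef
  let h : ℂ → ℂ := fun s => 2 * C * ((Real.pi : ℂ) ^ (s / 2) * (Complex.Gamma (s / 2))⁻¹)
  have hpi : ∀ s : ℂ, (Real.pi : ℂ) ^ s ≠ 0 := by
    intro s
    rw [Ne, Complex.cpow_eq_zero_iff]; simp [Real.pi_ne_zero]
  have hpid : Differentiable ℂ (fun s : ℂ => (Real.pi : ℂ) ^ (s / 2)) := by
    intro s
    apply DifferentiableAt.const_cpow (by fun_prop)
    left; simp [Real.pi_ne_zero]
  have hGd : Differentiable ℂ (fun s : ℂ => (Complex.Gamma (s / 2))⁻¹) :=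
    Complex.differentiable_one_div_Gamma.comp (differentiable_id.div_const 2)
  have hGd2 : Differentiable ℂ (fun s : ℂ => (Complex.Gamma (s / 2 + 1))⁻¹) :=
    Complex.differentiable_one_div_Gamma.comp ((differentiable_id.div_const 2).add_const 1)
  have hh : Differentiable ℂ h := (hpid.mul hGd).const_mul _
  have hds : Differentiable ℂ (dslope h (D : ℂ)) := by
    rw [← differentiableOn_univ, Complex.differentiableOn_dslope univ_mem]
    exact hh.differentiableOn
  have hhD : h D = sph m := by
    have hG : Complex.Gamma ((D : ℂ) / 2) ≠ 0 := 
      Complex.Gamma_ne_zero_of_re_pos (by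
        have : ((D : ℂ) / 2).re = D / 2 := by simp
        rw [this]; linarith)
    simp only [h]
    rw [hC, Complex.cpow_neg]
    have := hpi ((D : ℂ) / 2)
    field_simp
  refine ⟨fun s => (Real.pi : ℂ) ^ (s / 2) * (Complex.Gamma (s / 2))⁻¹ * E (s / 2) + dslope h D s
    - am m 0 * ((Real.pi : ℂ) ^ (s / 2) * (Complex.Gamma (s / 2 + 1))⁻¹), ?_, ?_⟩
  · exact (((hpid.mul hGd).mul (hE.comp (differentiable_id.div_const 2))).add hds).sub
      ((hpid.mul hGd2).const_mul _)
  · intro s hs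
    have hs0 : 0 < s.re := by linarith
    have hS := dirichlet_hasSum m s hs0 hs
    have hsne : s ≠ 0 := by rintro rfl; simp at hs0
    have hsD : s ≠ D := by rintro rfl; simp at hs
    have hsD' : s - D ≠ 0 := sub_ne_zero.mpr hsD
    refine ⟨hS.summable, (hI s hs).1, ?_⟩
    have h1 : (∑' k : Fin n → ℤ, ap m k / ((znorm k : ℂ) ^ s)) = _ := hS.tsum_eq
    have hre : (s / 2).re = s.re / 2 := by simp
    have hG : Complex.Gamma (s / 2) ≠ 0 := 
      Complex.Gamma_ne_zero_of_re_pos (by rw [hre]; linarith)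
    beta_reduce
    rw [h1, (hI s hs).2, hE2 (s / 2) (by rw [hre]; linarith) (by rw [hre]; linarith),
      dslope_of_ne _ hsD, slope_def_field, hhD, Complex.Gamma_add_one _ (div_ne_zero hsne two_ne_zero)]
    have e : s / 2 - (D : ℂ) / 2 = (s - D) / 2 := by ring
    rw [e]
    simp only [h]
    field_simp
    ring

/-- **Lemma.** For a polynomial `P ∈ ℂ[X₁,…,Xₙ]` of degree `d`, the difference
`Δ_P(s) = Σ'_{k∈ℤⁿ} P(k)/|k|^s − ∫_{ℝⁿ∖Bⁿ} P(x)/|x|^s dx` (defined for `Re s > d + n`)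
extends to an entire function on `ℂ`. -/
theorem deltaP_entire (n : ℕ) (P : MvPolynomial (Fin n) ℂ) :
    ∃ g : ℂ → ℂ, Differentiable ℂ g ∧
      ∀ s : ℂ, (P.totalDegree : ℝ) + (n : ℝ) < s.re →
        Summable (zetaPTerm P s) ∧
        IntegrableOn
          (fun x : EuclideanSpace ℝ (Fin n) =>
            MvPolynomial.eval (fun i => ((x i : ℝ) : ℂ)) P / ((‖x‖ : ℂ) ^ s))
          (Metric.closedBall (0 : EuclideanSpace ℝ (Fin n)) 1)ᶜ ∧
        g s = (∑' k : Fin n → ℤ, zetaPTerm P s k) -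
          ∫ x in (Metric.closedBall (0 : EuclideanSpace ℝ (Fin n)) 1)ᶜ,
            MvPolynomial.eval (fun i => ((x i : ℝ) : ℂ)) P / ((‖x‖ : ℂ) ^ s) := by
  choose g hg hg2 using fun m : Fin n → ℕ => mono_main m
  refine ⟨fun s => ∑ m ∈ P.support, P.coeff m * g m s, ?_, ?_⟩
  · exact Differentiable.fun_sum fun m _ => (hg m).const_mul _
  intro s hs
  have hm : ∀ m ∈ P.support, (∑ i, (m i : ℝ)) + n < s.re := by
    intro m hm
    have h1 := MvPolynomial.le_totalDegree hm
    rw [Finsupp.sum_fintype _ _ (fun _ => rfl)] at h1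
    have h2 : (∑ i, (m i : ℝ)) ≤ P.totalDegree := by exact_mod_cast h1
    linarith
  have e1 : zetaPTerm P s = fun k => ∑ m ∈ P.support, P.coeff m * (ap m k / ((znorm k : ℂ) ^ s)) := by
    ext k
    by_cases hk : k = 0
    · simp [zetaPTerm, ap, hk]
    · simp only [zetaPTerm, ap, hk, if_false]
      rw [MvPolynomial.eval_eq', Finset.sum_div]
      refine Finset.sum_congr rfl fun m _ => ?_
      rw [am, mul_div_assoc]
  have e2 : (fun x : EuclideanSpace ℝ (Fin n) =>
      MvPolynomial.eval (fun i => ((x i : ℝ) : ℂ)) P / ((‖x‖ : ℂ) ^ s)) = 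
      fun x => ∑ m ∈ P.support, P.coeff m * (pm m x / ((‖x‖ : ℂ) ^ s)) := by
    ext x
    rw [MvPolynomial.eval_eq', Finset.sum_div]
    refine Finset.sum_congr rfl fun m _ => ?_
    rw [pm, mul_div_assoc]
  have hS : ∀ m ∈ P.support, Summable fun k : Fin n → ℤ => P.coeff m * (ap m k / ((znorm k : ℂ) ^ s)) :=
    fun m h => (hg2 m s (hm m h)).1.mul_left _
  have hI : ∀ m ∈ P.support, IntegrableOn (fun x : EuclideanSpace ℝ (Fin n) =>
      P.coeff m * (pm m x / ((‖x‖ : ℂ) ^ s))) (Metric.closedBall (0 : EuclideanSpace ℝ (Fin n)) 1)ᶜ :=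
    fun m h => (hg2 m s (hm m h)).2.1.const_mul _
  rw [e1, e2]
  refine ⟨summable_sum hS, integrable_finsetSum _ hI, ?_⟩
  rw [Summable.tsum_finsetSum hS, integral_finsetSum _ hI, ← Finset.sum_sub_distrib]
  refine Finset.sum_congr rfl fun m h => ?_
  rw [tsum_mul_left, integral_const_mul, (hg2 m s (hm m h)).2.2, mul_sub]

end
end

section
/- Let P ∈ ℂ[X₁,…,Xₙ] be a homogeneous polynomial of degree d and let a ∈ ℝⁿ ∖ ℤⁿ. Then the function f_a(s) := Σ'_{k∈ℤⁿ} (P(k)/|k|^s) e^{2πi k·a}, which converges for Re(s) > d + n, extends holomorphically to the whole complex plane ℂ. -/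
open Filter Topology

noncomputable section

/-- The general term of the twisted series
`f_a(s) = Σ'_{k∈ℤⁿ} (P(k)/|k|^s) e^{2πi k·a}`, with the term at `k = 0` omitted. -/
def fTerm {n : ℕ} (P : MvPolynomial (Fin n) ℂ) (a : Fin n → ℝ) (s : ℂ) (k : Fin n → ℤ) : ℂ :=
  if k = 0 then 0 else
    MvPolynomial.eval (fun i => ((k i : ℤ) : ℂ)) P / ((znorm k : ℂ) ^ s) *
      Complex.exp (2 * (Real.pi : ℂ) * Complex.I * ((∑ i, (k i : ℝ) * a i : ℝ) : ℂ))

lemma znorm_summable {n : ℕ} (r : ℝ) (hr : r < -(n : ℝ)) :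
    Summable fun k : Fin n → ℤ => znorm k ^ r := by
  let b := (EuclideanSpace.basisFun (Fin n) ℝ).toBasis
  let L := Submodule.span ℤ (Set.range b)
  have h1 : Module.finrank ℤ L = n := by
    rw [ZLattice.rank ℝ L]; simp
  have h := ZLattice.summable_norm_rpow L r (by rw [h1]; exact hr)
  let f : (Fin n → ℤ) → L := fun k => ⟨∑ i, k i • b i,
    Submodule.sum_mem _ fun i _ => Submodule.smul_mem _ _ (Submodule.subset_span ⟨i, rfl⟩)⟩
  have hf : ∀ k i, ((f k : L) : EuclideanSpace ℝ (Fin n)) i = k i := by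
    intro k i
    simp [f, b, Finset.sum_apply, Pi.single_apply]
  have hinj : Function.Injective f := by
    intro k l hkl
    ext i
    have := hf k i
    rw [hkl, hf l i] at this
    exact (Int.cast_injective this).symm
  have h2 := h.comp_injective hinj
  refine h2.congr ?_
  intro k
  simp only [Function.comp, znorm]
  congr 1
  rw [Submodule.coe_norm, EuclideanSpace.norm_eq]
  simp [hf]

lemma znorm_large {n : ℕ} (R : ℝ) : ∀ᶠ k : Fin n → ℤ in cofinite, R < znorm k := by
  have h : Tendsto (fun k : Fin n → ℤ => ‖k‖) cofinite atTop := by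
    rw [← cocompact_eq_cofinite]
    exact tendsto_norm_cocompact_atTop
  filter_upwards [h.eventually_gt_atTop R] with k hk
  refine hk.trans_le ?_
  refine (pi_norm_le_iff_of_nonneg (Real.sqrt_nonneg _)).2 fun i => ?_
  rw [Int.norm_eq_abs]
  apply Real.abs_le_sqrt
  exact Finset.single_le_sum (f := fun i => (k i : ℝ)^2) (fun i _ => sq_nonneg _) (Finset.mem_univ i)

lemma poly_bound {n d : ℕ} (P : MvPolynomial (Fin n) ℂ) (hP : P.IsHomogeneous d) :
    ∃ C : ℝ, 0 ≤ C ∧ ∀ (R : ℝ) (x : Fin n → ℂ), (∀ i, ‖x i‖ ≤ R) →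
      ‖MvPolynomial.eval x P‖ ≤ C * R ^ d := by
  refine ⟨∑ m ∈ P.support, ‖P.coeff m‖, Finset.sum_nonneg fun _ _ => norm_nonneg _, ?_⟩
  intro R x hx
  rw [MvPolynomial.eval_eq, Finset.sum_mul]
  refine (norm_sum_le _ _).trans (Finset.sum_le_sum fun m hm => ?_)
  rw [norm_mul, norm_prod]
  gcongr
  have hm' := hP (MvPolynomial.mem_support_iff.1 hm)
  have : ∑ i, m i = d := by
    rw [← hm', Finsupp.weight_apply, Finsupp.sum_fintype] <;> simp
  calc _ ≤ ∏ i, R ^ (m i) := by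
        refine (Finset.prod_le_prod (fun _ _ => norm_nonneg _) fun i _ => ?_).trans_eq (Finset.prod_subset (Finset.subset_univ _) ?_)
        · rw [norm_pow]; gcongr; exact hx i
        · intro i _ hi; simp at hi; simp [hi]
    _ = R ^ d := by rw [Finset.prod_pow_eq_pow_sum, this]

/-- backward difference on functions of a complex variable -/
def cdiff (h : ℂ → ℂ) : ℂ → ℂ := fun z => h z - h (z - 1)

lemma cdiff_bound (h : ℂ → ℂ) (R M r : ℝ) (hr : 0 < r)
    (hd : DifferentiableOn ℂ h (Metric.ball 0 R)) (hb : ∀ z ∈ Metric.ball (0:ℂ) R, ‖h z‖ ≤ M) :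
    DifferentiableOn ℂ (cdiff h) (Metric.ball 0 (R - (r + 1))) ∧
      ∀ z ∈ Metric.ball (0:ℂ) (R - (r + 1)), ‖cdiff h z‖ ≤ M / r := by
  have key : ∀ z ∈ Metric.ball (0:ℂ) (R - (r + 1)), z ∈ Metric.ball (0:ℂ) (R - r) ∧
      z - 1 ∈ Metric.ball (0:ℂ) (R - r) := by
    intro z hz
    simp only [mem_ball_zero_iff] at *
    have := norm_sub_le z 1
    simp only [norm_one] at this
    constructor <;> linarith
  have sub : Metric.ball (0:ℂ) (R - r) ⊆ Metric.ball 0 R := Metric.ball_subset_ball (by linarith)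
  constructor
  · unfold cdiff
    refine DifferentiableOn.sub (hd.mono fun z hz => sub (key z hz).1) ?_
    exact DifferentiableOn.comp hd (by fun_prop) (fun z hz => sub (key z hz).2)
  · intro z hz
    have := Convex.norm_image_sub_le_of_norm_deriv_le (𝕜 := ℂ) (f := h) (C := M / r)
      (s := Metric.ball 0 (R - r)) (x := z - 1) (y := z) ?_ ?_ (convex_ball _ _) (key z hz).2 (key z hz).1
    · simpa [cdiff] using this
    · intro y hy
      exact hd.differentiableAt (Metric.isOpen_ball.mem_nhds (sub hy))
    · intro y hy
      have hcb : Metric.closedBall y r ⊆ Metric.ball 0 R := by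
        intro w hw
        simp only [mem_ball_zero_iff, mem_closedBall_iff_norm] at *
        have := norm_add_le (w - y) y
        rw [sub_add_cancel] at this
        linarith
      refine Complex.norm_deriv_le_of_forall_mem_sphere_norm_le hr ?_ ?_
      · exact (hd.mono hcb).diffContOnCl_ball le_rfl
      · exact fun w hw => hb w (hcb (Metric.sphere_subset_closedBall hw))

lemma cdiff_iter (N : ℕ) (h : ℂ → ℂ) (R M r : ℝ) (hr : 0 < r)
    (hd : DifferentiableOn ℂ h (Metric.ball 0 R)) (hb : ∀ z ∈ Metric.ball (0:ℂ) R, ‖h z‖ ≤ M) :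
    DifferentiableOn ℂ (cdiff^[N] h) (Metric.ball 0 (R - N * (r + 1))) ∧
      ∀ z ∈ Metric.ball (0:ℂ) (R - N * (r + 1)), ‖cdiff^[N] h z‖ ≤ M / r ^ N := by
  induction N with
  | zero => simpa only [Nat.cast_zero, zero_mul, sub_zero, pow_zero, div_one] using ⟨hd, hb⟩
  | succ N ih =>
    have := cdiff_bound _ _ _ r hr ih.1 ih.2
    rw [Function.iterate_succ_apply']
    have e : R - N * (r + 1) - (r + 1) = R - ((N + 1 : ℕ) : ℝ) * (r + 1) := by push_cast; ring
    have e2 : M / r ^ N / r = M / r ^ (N + 1) := by rw [div_div, pow_succ]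
    rwa [e, e2] at this

/-- backward difference on functions on the lattice -/
def zdiff {n : ℕ} (j : Fin n) (F : (Fin n → ℤ) → ℂ) : (Fin n → ℤ) → ℂ :=
  fun k => F k - F (k - Pi.single j 1)

lemma zdiff_iter_eq {n : ℕ} (j : Fin n) (F : (Fin n → ℤ) → ℂ) (k : Fin n → ℤ) (h : ℂ → ℂ) (T : ℕ)
    (hF : ∀ m : ℕ, m ≤ T → F (k - m • Pi.single j 1) = h (-(m:ℂ))) (N : ℕ) :
    ∀ m : ℕ, m + N ≤ T → (zdiff j)^[N] F (k - m • Pi.single j 1) = cdiff^[N] h (-(m:ℂ)) := by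
  induction N with
  | zero => simpa using hF
  | succ N ih =>
    intro m hm
    rw [Function.iterate_succ_apply', Function.iterate_succ_apply', zdiff, cdiff,
      ih m (by omega)]
    have := ih (m + 1) (by omega)
    rw [add_smul, one_smul, ← sub_sub] at this
    rw [this]
    push_cast
    congr 2
    ring_nf

lemma zdiff_differentiable {n : ℕ} (j : Fin n) (F : ℂ → (Fin n → ℤ) → ℂ)
    (hF : ∀ k, Differentiable ℂ fun s => F s k) (N : ℕ) :
    ∀ k, Differentiable ℂ fun s => (zdiff j)^[N] (F s) k := by
  induction N with
  | zero => simpa using hF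
  | succ N ih =>
    intro k
    simp only [Function.iterate_succ_apply', zdiff]
    exact (ih _).sub (ih _)

def chr {n : ℕ} (a : Fin n → ℝ) (k : Fin n → ℤ) : ℂ :=
  Complex.exp (2 * (Real.pi : ℂ) * Complex.I * ((∑ i, (k i : ℝ) * a i : ℝ) : ℂ))

lemma chr_norm {n : ℕ} (a : Fin n → ℝ) (k : Fin n → ℤ) : ‖chr a k‖ = 1 := by
  unfold chr
  rw [Complex.norm_exp]
  simp

lemma chr_sub {n : ℕ} (a : Fin n → ℝ) (j : Fin n) (k : Fin n → ℤ) :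
    chr a k = Complex.exp (2 * Real.pi * Complex.I * a j) * chr a (k - Pi.single j 1) := by
  unfold chr
  rw [← Complex.exp_add]
  congr 1
  have : ∑ i, (k i : ℝ) * a i = a j + ∑ i, (((k - Pi.single j 1 : Fin n → ℤ) i : ℤ) : ℝ) * a i := by
    simp only [Pi.sub_apply, Int.cast_sub, sub_mul, Finset.sum_sub_distrib]
    simp [Pi.single_apply]
  rw [this]; push_cast; ring

lemma hasSum_zdiff {n : ℕ} (a : Fin n → ℝ) (j : Fin n) (F : (Fin n → ℤ) → ℂ) (S : ℂ)
    (h : HasSum (fun k => F k * chr a k) S) :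
    HasSum (fun k => zdiff j F k * chr a k) ((1 - Complex.exp (2 * Real.pi * Complex.I * a j)) * S) := by
  have h2 := ((Equiv.subRight (Pi.single j (1:ℤ))).hasSum_iff.2 h).mul_left
    (Complex.exp (2 * Real.pi * Complex.I * a j))
  have h3 := h.sub h2
  rw [sub_mul, one_mul]
  refine h3.congr_fun ?_
  intro k
  simp only [Function.comp, Equiv.subRight_apply, zdiff]
  rw [chr_sub a j k]; ring

def Fs {n : ℕ} (P : MvPolynomial (Fin n) ℂ) (s : ℂ) (k : Fin n → ℤ) : ℂ :=
  if k = 0 then 0 else MvPolynomial.eval (fun i => ((k i : ℤ) : ℂ)) P / ((znorm k : ℂ) ^ s)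

lemma znorm_sq {n : ℕ} (k : Fin n → ℤ) : znorm k ^ 2 = ∑ i, (k i : ℝ) ^ 2 :=
  Real.sq_sqrt (Finset.sum_nonneg fun _ _ => sq_nonneg _)

lemma znorm_nonneg {n : ℕ} (k : Fin n → ℤ) : 0 ≤ znorm k := Real.sqrt_nonneg _

lemma abs_le_znorm {n : ℕ} (k : Fin n → ℤ) (i : Fin n) : |(k i : ℝ)| ≤ znorm k := by
  apply Real.abs_le_sqrt
  exact Finset.single_le_sum (f := fun i => (k i : ℝ)^2) (fun i _ => sq_nonneg _) (Finset.mem_univ i)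

lemma znorm_ne_zero {n : ℕ} (k : Fin n → ℤ) (h : k ≠ 0) : znorm k ≠ 0 := by
  intro h0
  apply h
  ext i
  have := abs_le_znorm k i
  rw [h0] at this
  have := abs_nonpos_iff.1 this
  simpa using this

lemma znorm_zero {n : ℕ} : znorm (0 : Fin n → ℤ) = 0 := by simp [znorm]

lemma znorm_sub_sq {n : ℕ} (k : Fin n → ℤ) (j : Fin n) (m : ℕ) :
    znorm (k - m • Pi.single j 1) ^ 2 = znorm k ^ 2 - 2 * k j * m + m ^ 2 := by
  rw [znorm_sq, znorm_sq]
  have : ∀ i, (((k - m • Pi.single j 1 : Fin n → ℤ) i : ℤ) : ℝ) ^ 2 =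
      (k i : ℝ) ^ 2 + (if i = j then - 2 * (k j : ℝ) * (m : ℝ) + (m : ℝ) ^ 2 else 0) := by
    intro i
    by_cases h : i = j
    · subst h; simp; ring
    · simp [h]
  simp only [this, Finset.sum_add_distrib]
  simp; ring

def ufun {n : ℕ} (j : Fin n) (k : Fin n → ℤ) (z : ℂ) : ℂ :=
  (2 * k j * z + z ^ 2) / (znorm k : ℂ) ^ 2

lemma ufun_bound {n : ℕ} (j : Fin n) (k : Fin n → ℤ) (hk : 0 < znorm k) (z : ℂ)
    (hz : ‖z‖ < znorm k / 8) : ‖ufun j k z‖ ≤ 1 / 2 := by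
  unfold ufun
  rw [norm_div, norm_pow, Complex.norm_real, Real.norm_of_nonneg hk.le, div_le_iff₀ (by positivity)]
  have h1 := abs_le_znorm k j
  have h2 : ‖(k j : ℂ)‖ = |(k j : ℝ)| := by simp
  calc ‖2 * (k j : ℂ) * z + z ^ 2‖ ≤ ‖2 * (k j : ℂ) * z‖ + ‖z ^ 2‖ := norm_add_le _ _
    _ = 2 * |(k j : ℝ)| * ‖z‖ + ‖z‖ ^ 2 := by simp
    _ ≤ 2 * znorm k * (znorm k / 8) + (znorm k / 8) ^ 2 := by gcongr
    _ ≤ _ := by nlinarith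

def hfun {n : ℕ} (P : MvPolynomial (Fin n) ℂ) (s : ℂ) (j : Fin n) (k : Fin n → ℤ) (z : ℂ) : ℂ :=
  MvPolynomial.eval (fun i => (k i : ℂ) + z * (Pi.single j 1 : Fin n → ℂ) i) P *
    (znorm k : ℂ) ^ (-s) * Complex.exp (-(s / 2) * Complex.log (1 + ufun j k z))

lemma hfun_diff {n : ℕ} (P : MvPolynomial (Fin n) ℂ) (s : ℂ) (j : Fin n) (k : Fin n → ℤ)
    (hk : 0 < znorm k) : DifferentiableOn ℂ (hfun P s j k) (Metric.ball 0 (znorm k / 8)) := by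
  intro z hz
  apply DifferentiableAt.differentiableWithinAt
  have hu := ufun_bound j k hk z (by simpa using hz)
  have hs : 1 + ufun j k z ∈ Complex.slitPlane :=
    Complex.mem_slitPlane_of_norm_lt_one (by linarith)
  have hud : DifferentiableAt ℂ (ufun j k) z := by unfold ufun; fun_prop
  have hp : DifferentiableAt ℂ (fun z : ℂ =>
      MvPolynomial.eval (fun i => (k i : ℂ) + z * (Pi.single j 1 : Fin n → ℂ) i) P) z := by
    simp only [MvPolynomial.eval_eq]
    fun_prop
  unfold hfun
  have hl : DifferentiableAt ℂ (fun z => Complex.log (1 + ufun j k z)) z :=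
    DifferentiableAt.clog (by fun_prop) hs
  fun_prop

lemma hfun_bound {n d : ℕ} (P : MvPolynomial (Fin n) ℂ) (C : ℝ) (hC0 : 0 ≤ C)
    (hC : ∀ (R : ℝ) (x : Fin n → ℂ), (∀ i, ‖x i‖ ≤ R) → ‖MvPolynomial.eval x P‖ ≤ C * R ^ d)
    (s : ℂ) (B : ℝ) (hB : ‖s‖ ≤ B) (j : Fin n) (k : Fin n → ℤ) (hk : 0 < znorm k) (z : ℂ)
    (hz : ‖z‖ < znorm k / 8) :
    ‖hfun P s j k z‖ ≤ C * (2 * znorm k) ^ d * znorm k ^ (-s.re) * Real.exp B := by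
  unfold hfun
  rw [norm_mul, norm_mul, Complex.norm_cpow_eq_rpow_re_of_pos hk, Complex.neg_re]
  gcongr
  · apply hC
    intro i
    have h1 := abs_le_znorm k i
    have h2 : ‖(Pi.single j 1 : Fin n → ℂ) i‖ ≤ 1 := by
      by_cases h : i = j
      · subst h; simp
      · simp [h]
    calc _ ≤ ‖(k i : ℂ)‖ + ‖z * (Pi.single j 1 : Fin n → ℂ) i‖ := norm_add_le _ _
      _ ≤ |(k i : ℝ)| + ‖z‖ * 1 := by
        rw [norm_mul]
        gcongr
        simp
      _ ≤ _ := by linarith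
  · refine (Complex.norm_exp_le_exp_norm _).trans (Real.exp_le_exp.2 ?_)
    have hu := ufun_bound j k hk z hz
    have hl := Complex.norm_log_one_add_half_le_self hu
    rw [norm_mul, norm_neg, norm_div]
    simp only [Complex.norm_ofNat]
    have : ‖Complex.log (1 + ufun j k z)‖ ≤ 1 := by linarith
    nlinarith [norm_nonneg s, norm_nonneg (Complex.log (1 + ufun j k z))]

lemma hfun_eq {n : ℕ} (P : MvPolynomial (Fin n) ℂ) (s : ℂ) (j : Fin n) (k : Fin n → ℤ)
    (hk : 0 < znorm k) (m : ℕ) (hm : (m : ℝ) < znorm k / 8) :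
    Fs P s (k - m • Pi.single j 1) = hfun P s j k (-(m : ℂ)) := by
  have hu := ufun_bound j k hk (-(m:ℂ)) (by simpa using hm)
  set k' := k - m • Pi.single j 1 with hk'
  have e : 1 + ufun j k (-(m:ℂ)) = (((znorm k' / znorm k) ^ 2 : ℝ) : ℂ) := by
    rw [div_pow, hk', znorm_sub_sq]
    unfold ufun
    push_cast
    have : (znorm k : ℂ) ≠ 0 := by exact_mod_cast hk.ne'
    field_simp
    ring
  have hne : k' ≠ 0 := by
    intro h0
    rw [h0, znorm_zero] at e
    have : ufun j k (-(m:ℂ)) = -1 := by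
      simp at e; linear_combination e
    rw [this] at hu
    norm_num at hu
  have hpos : 0 < znorm k' := lt_of_le_of_ne (znorm_nonneg _) (znorm_ne_zero _ hne).symm
  unfold hfun Fs
  rw [if_neg hne, e, ← Complex.ofReal_log (by positivity), Real.log_pow, Real.log_div hpos.ne' hk.ne',
    mul_assoc, div_eq_mul_inv]
  congr 1
  · congr 2
    ext i
    by_cases h : i = j
    · subst h; simp [hk']; ring
    · simp [h, hk']
  · rw [← Complex.cpow_neg, Complex.cpow_def_of_ne_zero (by exact_mod_cast hpos.ne'),
      Complex.cpow_def_of_ne_zero (by exact_mod_cast hk.ne'), ← Complex.exp_add,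
      ← Complex.ofReal_log hpos.le, ← Complex.ofReal_log hk.le]
    congr 1
    push_cast
    ring

lemma main_bound {n d : ℕ} (P : MvPolynomial (Fin n) ℂ) (hP : P.IsHomogeneous d) (j : Fin n)
    (N : ℕ) (B : ℝ) :
    ∃ C R0 : ℝ, 0 ≤ C ∧ 1 ≤ R0 ∧ ∀ k, R0 < znorm k → ∀ s : ℂ, ‖s‖ ≤ B →
      ‖(zdiff j)^[N] (Fs P s) k‖ ≤ C * znorm k ^ ((d : ℝ) - s.re - N) := by
  obtain ⟨C, hC0, hC⟩ := poly_bound P hP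
  refine ⟨C * 2 ^ d * Real.exp B * (32 * (N + 1)) ^ N, 32 * (N + 1), by positivity, ?_, ?_⟩
  · have : (0:ℝ) ≤ N := by positivity
    linarith
  intro k hk s hs
  have hN : (0:ℝ) ≤ N := by positivity
  have hk0 : 0 < znorm k := by linarith
  set r := znorm k / (32 * (N + 1)) with hr
  have hr0 : 0 < r := by positivity
  have h1 := zdiff_iter_eq j (Fs P s) k (hfun P s j k) N ?_ N 0 (by omega)
  · simp only [zero_smul, sub_zero, Nat.cast_zero, neg_zero] at h1
    rw [h1]
    have h2 := (cdiff_iter N (hfun P s j k) (znorm k / 8) _ r hr0 (hfun_diff P s j k hk0)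
      (fun z hz => hfun_bound P C hC0 hC s B hs j k hk0 z (by simpa using hz))).2 0 ?_
    · refine h2.trans_eq ?_
      rw [hr, sub_eq_add_neg, sub_eq_add_neg, Real.rpow_add hk0, Real.rpow_add hk0, Real.rpow_neg hk0.le (N:ℝ),
        Real.rpow_natCast, Real.rpow_natCast, div_pow, mul_pow]
      field_simp
    · simp only [mem_ball_zero_iff, norm_zero]
      have : r * (N + 1) = znorm k / 32 := by rw [hr]; field_simp
      nlinarith
  · intro m hm
    apply hfun_eq _ _ _ _ hk0
    have : (m:ℝ) ≤ N := by exact_mod_cast hm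
    linarith

lemma Fs_diff {n : ℕ} (P : MvPolynomial (Fin n) ℂ) (k : Fin n → ℤ) :
    Differentiable ℂ fun s => Fs P s k := by
  unfold Fs
  by_cases h : k = 0
  · simp [h]
  · simp only [h, if_false]
    have hk : (znorm k : ℂ) ≠ 0 := by exact_mod_cast znorm_ne_zero k h
    intro s
    refine DifferentiableAt.div (by fun_prop) ?_ ?_
    · exact DifferentiableAt.const_cpow (by fun_prop) (Or.inl hk)
    · simp [Complex.cpow_eq_zero_iff, hk]

lemma unif_bound {n d : ℕ} (P : MvPolynomial (Fin n) ℂ) (hP : P.IsHomogeneous d) (j : Fin n)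
    (a : Fin n → ℝ) (N : ℕ) (B σ : ℝ) (hσ : (d : ℝ) + n - N < σ) :
    ∃ u : (Fin n → ℤ) → ℝ, Summable u ∧ ∀ k, ∀ s : ℂ, ‖s‖ ≤ B → σ ≤ s.re →
      ‖(zdiff j)^[N] (Fs P s) k * chr a k‖ ≤ u k := by
  obtain ⟨C, R0, hC, hR0, hb⟩ := main_bound P hP j N B
  have hc : ∀ k, ∃ v : ℝ, ∀ s : ℂ, ‖s‖ ≤ B → ‖(zdiff j)^[N] (Fs P s) k‖ ≤ v := by
    intro k
    obtain ⟨v, hv⟩ := (isCompact_closedBall (0:ℂ) B).exists_bound_of_continuousOn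
      (zdiff_differentiable j (Fs P) (Fs_diff P) N k).continuous.continuousOn
    exact ⟨v, fun s hs => hv s (by simpa using hs)⟩
  choose v hv using hc
  classical
  refine ⟨fun k => if R0 < znorm k then C * znorm k ^ ((d : ℝ) - σ - N) else v k, ?_, ?_⟩
  · refine Summable.congr_cofinite
      ((znorm_summable (n := n) ((d : ℝ) - σ - N) (by linarith)).mul_left C) ?_
    filter_upwards [znorm_large R0] with k hk
    simp [hk]
  · intro k s hs hσs
    rw [norm_mul, chr_norm, mul_one]
    beta_reduce
    split_ifs with h
    · refine (hb k h s hs).trans ?_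
      gcongr
      linarith
    · exact hv k s hs

def gN {n : ℕ} (P : MvPolynomial (Fin n) ℂ) (a : Fin n → ℝ) (j : Fin n) (N : ℕ) (s : ℂ) : ℂ :=
  ((1 - Complex.exp (2 * Real.pi * Complex.I * a j)) ^ N)⁻¹ *
    ∑' k, (zdiff j)^[N] (Fs P s) k * chr a k

lemma gN_summable {n d : ℕ} (P : MvPolynomial (Fin n) ℂ) (hP : P.IsHomogeneous d) (j : Fin n)
    (a : Fin n → ℝ) (N : ℕ) (s : ℂ) (hs : (d : ℝ) + n - N < s.re) :
    Summable fun k => (zdiff j)^[N] (Fs P s) k * chr a k := by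
  obtain ⟨u, hu, h⟩ := unif_bound P hP j a N ‖s‖ s.re hs
  exact Summable.of_norm_bounded hu fun k => h k s le_rfl le_rfl

lemma gN_diff {n d : ℕ} (P : MvPolynomial (Fin n) ℂ) (hP : P.IsHomogeneous d) (j : Fin n)
    (a : Fin n → ℝ) (N : ℕ) (s : ℂ) (hs : (d : ℝ) + n - N < s.re) :
    DifferentiableAt ℂ (gN P a j N) s := by
  obtain ⟨σ, h1, h2⟩ := exists_between hs
  obtain ⟨u, hu, h⟩ := unif_bound P hP j a N (‖s‖ + 1) σ h1
  have ho : IsOpen (Metric.ball (0:ℂ) (‖s‖ + 1) ∩ {z : ℂ | σ < z.re}) :=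
    Metric.isOpen_ball.inter (isOpen_lt continuous_const Complex.continuous_re)
  have := Complex.differentiableOn_tsum_of_summable_norm hu
    (F := fun k s => (zdiff j)^[N] (Fs P s) k * chr a k)
    (fun k => ((zdiff_differentiable j (Fs P) (Fs_diff P) N k).mul_const _).differentiableOn)
    ho (fun k w hw => h k w (mem_ball_zero_iff.1 hw.1).le hw.2.le)
  unfold gN
  exact (this.differentiableAt (ho.mem_nhds ⟨by simp, h2⟩)).const_mul _

lemma gN_succ {n d : ℕ} (P : MvPolynomial (Fin n) ℂ) (hP : P.IsHomogeneous d) (j : Fin n)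
    (a : Fin n → ℝ) (ha : 1 - Complex.exp (2 * Real.pi * Complex.I * a j) ≠ 0)
    (N : ℕ) (s : ℂ) (hs : (d : ℝ) + n - N < s.re) :
    gN P a j (N + 1) s = gN P a j N s := by
  have h := hasSum_zdiff a j _ _ (gN_summable P hP j a N s hs).hasSum
  unfold gN
  simp only [Function.iterate_succ_apply', h.tsum_eq, pow_succ]
  field_simp

lemma gN_add {n d : ℕ} (P : MvPolynomial (Fin n) ℂ) (hP : P.IsHomogeneous d) (j : Fin n)
    (a : Fin n → ℝ) (ha : 1 - Complex.exp (2 * Real.pi * Complex.I * a j) ≠ 0)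
    (N M : ℕ) (hNM : N ≤ M) (s : ℂ) (hs : (d : ℝ) + n - N < s.re) :
    gN P a j M s = gN P a j N s := by
  induction M, hNM using Nat.le_induction with
  | base => rfl
  | succ M hM ih =>
    rw [gN_succ P hP j a ha M s, ih]
    have : (N:ℝ) ≤ M := by exact_mod_cast hM
    linarith

/-- **Theorem.** If `P` is homogeneous of degree `d` and `a ∈ ℝⁿ ∖ ℤⁿ`, then
`f_a(s) = Σ'_{k∈ℤⁿ} (P(k)/|k|^s) e^{2πi k·a}` (convergent for `Re s > d + n`)
extends holomorphically to the whole complex plane. -/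
theorem fa_entire (n : ℕ) (d : ℕ) (P : MvPolynomial (Fin n) ℂ) (hP : P.IsHomogeneous d)
    (a : Fin n → ℝ) (ha : ¬ ∀ i, ∃ m : ℤ, a i = (m : ℝ)) :
    ∃ g : ℂ → ℂ, Differentiable ℂ g ∧
      ∀ s : ℂ, (d : ℝ) + (n : ℝ) < s.re → HasSum (fTerm P a s) (g s) := by
  push Not at ha
  obtain ⟨j, hj⟩ := ha
  have hw : 1 - Complex.exp (2 * Real.pi * Complex.I * a j) ≠ 0 := by
    intro h
    have h1 := (sub_eq_zero.1 h).symm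
    rw [Complex.exp_eq_one_iff] at h1
    obtain ⟨m, hm⟩ := h1
    apply hj m
    have h2 : (2 * Real.pi * Complex.I : ℂ) * a j = (2 * Real.pi * Complex.I) * m := by
      rw [hm]; ring
    have h3 := mul_left_cancel₀ Complex.two_pi_I_ne_zero h2
    exact_mod_cast h3
  let Nf : ℂ → ℕ := fun s => ⌈(d : ℝ) + n - s.re⌉₊ + 1
  have hNf : ∀ s : ℂ, (d : ℝ) + n - Nf s < s.re := by
    intro s
    have := Nat.le_ceil ((d : ℝ) + n - s.re)
    simp only [Nf]
    push_cast
    linarith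
  have hg : ∀ (N : ℕ) (s : ℂ), (d : ℝ) + n - N < s.re → gN P a j (Nf s) s = gN P a j N s := by
    intro N s hs
    rw [← gN_add P hP j a hw N (max N (Nf s)) (le_max_left _ _) s hs,
      ← gN_add P hP j a hw (Nf s) (max N (Nf s)) (le_max_right _ _) s (hNf s)]
  refine ⟨fun s => gN P a j (Nf s) s, ?_, ?_⟩
  · intro s
    refine (gN_diff P hP j a (Nf s) s (hNf s)).congr_of_eventuallyEq ?_
    have ho : IsOpen {z : ℂ | (d : ℝ) + n - Nf s < z.re} :=
      isOpen_lt continuous_const Complex.continuous_re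
    filter_upwards [ho.mem_nhds (hNf s)] with z hz
    exact hg (Nf s) z hz
  · intro s hs
    have hs' : (d : ℝ) + n - (0 : ℕ) < s.re := by simpa using hs
    have h := (gN_summable P hP j a 0 s hs').hasSum
    beta_reduce
    rw [hg 0 s hs']
    have e : gN P a j 0 s = ∑' k, (zdiff j)^[0] (Fs P s) k * chr a k := by simp [gN]
    rw [e]
    refine h.congr_fun ?_
    intro k
    simp only [Function.iterate_zero, id, fTerm, Fs, chr]
    split_ifs <;> simp


end
end

section
/- Let G(X) = P(X)/(X₁²+⋯+Xₙ²+1)^{r/2} with P ∈ ℂ[X₁,…,Xₙ] and r ∈ ℕ₀, and let a ∈ ℝⁿ and u ∈ ℤⁿ be such that d(a·u, ℤ) := inf_{m∈ℤ} |a·u − m| > 0. Define F₀(G;a;s) := Σ'_{k∈ℤⁿ} (G(k)/|k|^s) e^{2πi k·a} and F₁(G;a;s) := Σ_{k∈ℤⁿ} (G(k)/(|k|²+1)^{s/2}) e^{2πi k·a}. Then for every N ∈ ℕ and each i ∈ {0,1}, there exist positive constants C_i, B_i, A_i depending only on G, N and u (and not on a), such that s ↦ F_i(G;a;s) extends holomorphically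 to the half-plane {Re(s) > −N} and satisfies there |F_i(G;a;s)| ≤ C_i (1+|s|)^{B_i} · d(a·u, ℤ)^{−A_i}. -/
open Filter Topology

noncomputable section

/-- Distance of a real number to the integers, `d(t, ℤ) = inf_{m∈ℤ} |t − m|`. -/
def distInt (t : ℝ) : ℝ := ⨅ m : ℤ, |t - (m : ℝ)|

/-- The value `G(k) = P(k)/(|k|²+1)^{r/2}`. -/
def Gval {n : ℕ} (P : MvPolynomial (Fin n) ℂ) (r : ℕ) (k : Fin n → ℤ) : ℂ :=
  MvPolynomial.eval (fun i => ((k i : ℤ) : ℂ)) P /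
    (((∑ i, ((k i : ℝ)) ^ 2 + 1 : ℝ) ^ ((r : ℝ) / 2) : ℝ) : ℂ)

/-- Term of `F₀(G;a;s) = Σ'_{k∈ℤⁿ} (G(k)/|k|^s) e^{2πi k·a}` (term at `k = 0` omitted). -/
def F0Term {n : ℕ} (P : MvPolynomial (Fin n) ℂ) (r : ℕ) (a : Fin n → ℝ) (s : ℂ)
    (k : Fin n → ℤ) : ℂ :=
  if k = 0 then 0 else
    Gval P r k / ((znorm k : ℂ) ^ s) *
      Complex.exp (2 * (Real.pi : ℂ) * Complex.I * ((∑ i, (k i : ℝ) * a i : ℝ) : ℂ))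

/-- Term of `F₁(G;a;s) = Σ_{k∈ℤⁿ} (G(k)/(|k|²+1)^{s/2}) e^{2πi k·a}`. -/
def F1Term {n : ℕ} (P : MvPolynomial (Fin n) ℂ) (r : ℕ) (a : Fin n → ℝ) (s : ℂ)
    (k : Fin n → ℤ) : ℂ :=
  Gval P r k / (((∑ i, ((k i : ℝ)) ^ 2 + 1 : ℝ) : ℂ) ^ (s / 2)) *
    Complex.exp (2 * (Real.pi : ℂ) * Complex.I * ((∑ i, (k i : ℝ) * a i : ℝ) : ℂ))

lemma summable_int_norm (n : ℕ) (p : ℝ) (hp : p < -(n : ℝ)) :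
    Summable fun k : Fin n → ℤ => ‖k‖ ^ p := by
  let b := Pi.basisFun ℝ (Fin n)
  let L := Submodule.span ℤ (Set.range b)
  have hrank : Module.finrank ℤ L = n := by
    rw [ZLattice.rank ℝ L]; simp
  have h := ZLattice.summable_norm_rpow L p (by rw [hrank]; exact hp)
  have hmem : ∀ k : Fin n → ℤ, (fun i => (k i : ℝ)) ∈ L := by
    intro k
    have : (fun i => (k i : ℝ)) = ∑ i, k i • b i := by
      ext j
      simp [b, Finset.sum_apply, Pi.single_apply]
    rw [this]
    exact Submodule.sum_mem _ fun i _ =>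
      Submodule.smul_mem _ _ (Submodule.subset_span ⟨i, rfl⟩)
  let e : (Fin n → ℤ) → L := fun k => ⟨fun i => (k i : ℝ), hmem k⟩
  have he : Function.Injective e := by
    intro k l hkl
    ext i
    have : ((k i : ℤ) : ℝ) = (l i : ℝ) := congrFun (congrArg Subtype.val hkl) i
    exact_mod_cast this
  refine (h.comp_injective he).congr fun k => ?_
  have : ‖e k‖ = ‖k‖ := by
    change ‖(fun i => (k i : ℝ))‖ = ‖k‖
    simp only [Pi.norm_def]
    congr 2
  change ‖e k‖ ^ p = ‖k‖ ^ p
  rw [this]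

lemma summable_int_inv (n : ℕ) :
    Summable fun k : Fin n → ℤ => ((1 + ‖k‖) ^ (n + 1))⁻¹ := by
  have h := summable_int_norm n (-((n + 1 : ℕ) : ℝ)) (by push_cast; linarith)
  refine Summable.of_norm_bounded_eventually h ?_
  have : ∀ᶠ k : Fin n → ℤ in cofinite, k ≠ 0 := by
    simp
  filter_upwards [this] with k hk
  have hk' : 0 < ‖k‖ := norm_pos_iff.2 hk
  rw [Real.rpow_neg hk'.le, Real.rpow_natCast, Real.norm_of_nonneg (by positivity)]
  gcongr
  linarith

lemma fwdDiff_step (φ : ℂ → ℂ) (ρ K δ : ℝ) (hδ : 0 < δ)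
    (hd : DifferentiableOn ℂ φ (Metric.ball 0 ρ))
    (hK : ∀ z ∈ Metric.ball (0 : ℂ) ρ, ‖φ z‖ ≤ K) :
    DifferentiableOn ℂ (fwdDiff 1 φ) (Metric.ball 0 (ρ - (δ + 1))) ∧
      ∀ z ∈ Metric.ball (0 : ℂ) (ρ - (δ + 1)), ‖fwdDiff 1 φ z‖ ≤ K / δ := by
  constructor
  · intro z hz
    have hz' : ‖z‖ < ρ - (δ + 1) := by simpa using hz
    have hz1 : ‖z + 1‖ ≤ ‖z‖ + 1 := by simpa using norm_add_le z 1
    have h1 : DifferentiableAt ℂ φ z :=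
      hd.differentiableAt (Metric.isOpen_ball.mem_nhds (by simp; linarith))
    have h2 : DifferentiableAt ℂ φ (z + 1) :=
      hd.differentiableAt (Metric.isOpen_ball.mem_nhds (by simp; linarith))
    have h3 : DifferentiableAt ℂ (fun z => φ (z + 1)) z :=
      h2.comp z (differentiableAt_id.add_const 1)
    exact (h3.sub h1).differentiableWithinAt
  · intro z hz
    have hz' : ‖z‖ < ρ - (δ + 1) := by simpa using hz
    have hz1 : ‖z + 1‖ ≤ ‖z‖ + 1 := by simpa using norm_add_le z 1
    have key := Convex.norm_image_sub_le_of_norm_deriv_le (𝕜 := ℂ) (f := φ) (C := K / δ)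
      (s := Metric.ball 0 (ρ - δ)) (x := z) (y := z + 1) ?_ ?_ (convex_ball _ _)
      (by simp; linarith) (by simp; linarith)
    · simpa [fwdDiff] using key
    · intro w hw
      have hw' : ‖w‖ < ρ - δ := by simpa using hw
      exact hd.differentiableAt (Metric.isOpen_ball.mem_nhds (by simp; linarith))
    · intro w hw
      have hw' : ‖w‖ < ρ - δ := by simpa using hw
      have hsub : Metric.closedBall w δ ⊆ Metric.ball 0 ρ := by
        intro v hv
        have hv' : ‖v - w‖ ≤ δ := by simpa [dist_eq_norm] using hv
        have : ‖v‖ ≤ ‖v - w‖ + ‖w‖ := by simpa using norm_add_le (v - w) w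
        simp; linarith
      refine Complex.norm_deriv_le_of_forall_mem_sphere_norm_le hδ ?_ ?_
      · refine DifferentiableOn.diffContOnCl ?_
        rw [closure_ball w hδ.ne']
        exact hd.mono hsub
      · intro v hv
        exact hK v (hsub (Metric.sphere_subset_closedBall hv))

lemma fwdDiff_iter_bound (φ : ℂ → ℂ) (ρ K δ : ℝ) (hδ : 0 < δ)
    (hd : DifferentiableOn ℂ φ (Metric.ball 0 ρ))
    (hK : ∀ z ∈ Metric.ball (0 : ℂ) ρ, ‖φ z‖ ≤ K) (j : ℕ) :
    DifferentiableOn ℂ ((fwdDiff 1)^[j] φ) (Metric.ball 0 (ρ - j * (δ + 1))) ∧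
      ∀ z ∈ Metric.ball (0 : ℂ) (ρ - j * (δ + 1)), ‖(fwdDiff 1)^[j] φ z‖ ≤ K / δ ^ j := by
  induction j with
  | zero => simpa using ⟨hd, by simpa using hK⟩
  | succ j ih =>
    have := fwdDiff_step _ _ _ δ hδ ih.1 ih.2
    rw [Function.iterate_succ_apply']
    have e1 : ρ - ((j + 1 : ℕ) : ℝ) * (δ + 1) = ρ - j * (δ + 1) - (δ + 1) := by
      push_cast; ring
    rw [e1, pow_succ, ← div_div]
    exact this

lemma fwdDiff_transfer {n : ℕ} (u k : Fin n → ℤ) (f : (Fin n → ℤ) → ℂ) (φ : ℂ → ℂ) (M : ℕ)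
    (h : ∀ m : ℕ, m ≤ M → φ m = f (k + m • u)) (j : ℕ) :
    ∀ m : ℕ, j + m ≤ M → (fwdDiff u)^[j] f (k + m • u) = (fwdDiff 1)^[j] φ (m : ℂ) := by
  induction j with
  | zero => intro m hm; simpa using (h m (by omega)).symm
  | succ j ih =>
    intro m hm
    rw [Function.iterate_succ_apply', Function.iterate_succ_apply']
    simp only [fwdDiff]
    rw [← ih m (by omega)]
    have := ih (m + 1) (by omega)
    push_cast at this
    rw [← this, add_assoc, succ_nsmul]

lemma fwdDiff_trivial {n : ℕ} (u : Fin n → ℤ) (D : ℕ) (j : ℕ) :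
    ∀ (C : ℝ) (f : (Fin n → ℤ) → ℂ), 0 ≤ C → (∀ k, ‖f k‖ ≤ C * (1 + ‖k‖) ^ D) →
    ∀ k, ‖(fwdDiff u)^[j] f k‖ ≤ C * ((1 + ‖u‖) ^ D + 1) ^ j * (1 + ‖k‖) ^ D := by
  induction j with
  | zero => intro C f _ h k; simpa using h k
  | succ j ih =>
    intro C f hC h k
    rw [Function.iterate_succ_apply]
    refine (ih (C * ((1 + ‖u‖) ^ D + 1)) (fwdDiff u f) (by positivity) ?_ k).trans
      (le_of_eq (by ring))
    intro k
    have h1 := h (k + u)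
    have h2 := h k
    have h3 : ‖f (k + u) - f k‖ ≤ ‖f (k + u)‖ + ‖f k‖ := norm_sub_le _ _
    have h4 : (1 + ‖k + u‖) ^ D ≤ (1 + ‖u‖) ^ D * (1 + ‖k‖) ^ D := by
      rw [← mul_pow]
      gcongr
      have := norm_add_le k u
      nlinarith [norm_nonneg k, norm_nonneg u]
    have h5 := mul_le_mul_of_nonneg_left h4 hC
    simp only [fwdDiff]
    nlinarith

lemma fwdDiff_hasSum {n : ℕ} (u : Fin n → ℤ) (E : (Fin n → ℤ) → ℂ) (z : ℂ)
    (hE : ∀ k, E k = z * E (k + u)) (f : (Fin n → ℤ) → ℂ) (S : ℂ)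
    (h : HasSum (fun k => f k * E k) S) (j : ℕ) :
    HasSum (fun k => (fwdDiff u)^[j] f k * E k) ((z - 1) ^ j * S) := by
  induction j with
  | zero => simpa using h
  | succ j ih =>
    simp only [Function.iterate_succ_apply']
    have h1 := ((Equiv.addRight u).hasSum_iff.2 ih).mul_left z
    have h2 := h1.sub ih
    have e1 : z * ((z - 1) ^ j * S) - (z - 1) ^ j * S = (z - 1) ^ (j + 1) * S := by ring
    rw [e1] at h2
    have e2 : (fun k => fwdDiff u ((fwdDiff u)^[j] f) k * E k) = fun k =>
        z * ((fun k => (fwdDiff u)^[j] f k * E k) ∘ (Equiv.addRight u)) k -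
          (fwdDiff u)^[j] f k * E k := by
      ext k
      simp only [Function.comp, Equiv.coe_addRight]
      rw [show fwdDiff u ((fwdDiff u)^[j] f) k =
        (fwdDiff u)^[j] f (k + u) - (fwdDiff u)^[j] f k from rfl, sub_mul]
      congr 1
      rw [hE k]; ring
    rw [e2]
    exact h2

lemma distInt_le (t : ℝ) (m : ℤ) : distInt t ≤ |t - m| :=
  ciInf_le ⟨0, by rintro _ ⟨m, rfl⟩; positivity⟩ m

lemma distInt_le_exp (t : ℝ) :
    distInt t ≤ ‖Complex.exp (-(2 * (Real.pi : ℂ) * Complex.I * (t : ℂ))) - 1‖ := by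
  have h1 := distInt_le t (round t)
  set x := t - round t with hx
  have h2 : |x| ≤ 1 / 2 := abs_sub_round t
  have h3 : Complex.exp (-(2 * (Real.pi : ℂ) * Complex.I * (t : ℂ))) =
      Complex.exp (Complex.I * ((-(2 * Real.pi * x) : ℝ) : ℂ)) := by
    rw [Complex.exp_eq_exp_iff_exists_int]
    refine ⟨-round t, ?_⟩
    rw [hx]; push_cast; ring
  rw [h3, Complex.norm_exp_I_mul_ofReal_sub_one]
  have h4 := Real.mul_abs_le_abs_sin (x := Real.pi * x) ?_
  · have h5 : -(2 * Real.pi * x) / 2 = -(Real.pi * x) := by ring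
    rw [h5, Real.sin_neg, mul_neg, norm_neg, norm_mul, Real.norm_eq_abs, Real.norm_eq_abs]
    rw [abs_mul, abs_of_pos Real.pi_pos] at h4
    have h6 : 2 / Real.pi * (Real.pi * |x|) = 2 * |x| := by
      field_simp
    rw [h6] at h4
    have : |(2 : ℝ)| = 2 := by norm_num
    rw [this]
    have := abs_nonneg x
    linarith
  · rw [abs_mul, abs_of_pos Real.pi_pos]
    nlinarith [Real.pi_pos]

lemma key_bound (n N : ℕ) (u : Fin n → ℤ) (f : ℂ → (Fin n → ℤ) → ℂ) (D M : ℕ) (C c R : ℝ)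
    (hC : 0 ≤ C) (hc : 0 < c) (hR : 0 < R)
    (hM : M = D + (n + 1))
    (H3 : ∀ s : ℂ, -(N : ℝ) < s.re → ∀ k, ‖f s k‖ ≤ C * (1 + ‖k‖) ^ D)
    (H4 : ∀ s : ℂ, -(N : ℝ) < s.re → ∀ k : Fin n → ℤ, R * (1 + ‖s‖) < 1 + ‖k‖ →
      ∃ φ : ℂ → ℂ, DifferentiableOn ℂ φ (Metric.ball 0 (c * (1 + ‖k‖) / (1 + ‖s‖))) ∧
        (∀ z ∈ Metric.ball (0 : ℂ) (c * (1 + ‖k‖) / (1 + ‖s‖)), ‖φ z‖ ≤ C * (1 + ‖k‖) ^ D) ∧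
        ∀ m : ℕ, (m : ℂ) ∈ Metric.ball (0 : ℂ) (c * (1 + ‖k‖) / (1 + ‖s‖)) →
          φ m = f s (k + m • u)) :
    ∃ K > (0 : ℝ), ∀ s : ℂ, -(N : ℝ) < s.re → ∀ k : Fin n → ℤ,
      ‖(fwdDiff u)^[M] (f s) k‖ ≤ K * (1 + ‖s‖) ^ M * ((1 + ‖k‖) ^ (n + 1))⁻¹ := by
  set R' := max R (2 * (M + 1) / c) with hR'
  have hR'0 : 0 < R' := lt_of_lt_of_le hR (le_max_left _ _)
  set K1 := C * (2 * (M + 1) / c) ^ M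
  set K2 := C * ((1 + ‖u‖) ^ D + 1) ^ M * R' ^ M
  have hK1 : 0 ≤ K1 := by positivity
  have hK2 : 0 ≤ K2 := by positivity
  refine ⟨K1 + K2 + 1, by positivity, fun s hs k => ?_⟩
  have hS : 0 < 1 + ‖s‖ := by positivity
  have hk : 0 < 1 + ‖k‖ := by positivity
  have hpow : (1 + ‖k‖) ^ M = (1 + ‖k‖) ^ D * (1 + ‖k‖) ^ (n + 1) := by rw [hM, pow_add]
  have hX : 0 ≤ (1 + ‖s‖) ^ M * ((1 + ‖k‖) ^ (n + 1))⁻¹ := by positivity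
  by_cases hcase : R' * (1 + ‖s‖) < 1 + ‖k‖
  · suffices h : ‖(fwdDiff u)^[M] (f s) k‖ ≤ K1 * (1 + ‖s‖) ^ M * ((1 + ‖k‖) ^ (n + 1))⁻¹ by
      refine h.trans ?_
      rw [mul_assoc _ ((1 + ‖s‖) ^ M), mul_assoc _ ((1 + ‖s‖) ^ M)]
      refine mul_le_mul_of_nonneg_right ?_ hX
      linarith
    obtain ⟨φ, h1, h2, h3⟩ := H4 s hs k (lt_of_le_of_lt
      (mul_le_mul_of_nonneg_right (le_max_left _ _) hS.le) hcase)
    set ρ := c * (1 + ‖k‖) / (1 + ‖s‖) with hρ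
    have hρ2 : 2 * ((M : ℝ) + 1) < ρ := by
      have : 2 * (M + 1) / c * (1 + ‖s‖) < 1 + ‖k‖ := lt_of_le_of_lt
        (mul_le_mul_of_nonneg_right (le_max_right _ _) hS.le) hcase
      rw [hρ, lt_div_iff₀ hS]
      rw [div_mul_eq_mul_div, div_lt_iff₀ hc] at this
      linarith
    set δ := ρ / (2 * (M + 1)) with hδ
    have hM1 : (0 : ℝ) < 2 * (M + 1) := by positivity
    have hδ1 : 1 < δ := by rw [hδ, lt_div_iff₀ hM1]; linarith
    have hρδ : ρ = δ * (2 * (M + 1)) := by rw [hδ]; field_simp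
    have h4 := (fwdDiff_iter_bound φ ρ _ δ (by linarith) h1 h2 M).2 0 (by
      simp only [Metric.mem_ball, dist_self]
      have : (0 : ℝ) ≤ M := by positivity
      nlinarith)
    have h5 := fwdDiff_transfer u k (f s) φ M (fun m hm => h3 m (by
      have : (m : ℝ) ≤ M := by exact_mod_cast hm
      simp; linarith)) M 0 (by simp)
    simp only [zero_smul, add_zero, Nat.cast_zero] at h5
    rw [h5]
    refine h4.trans (le_of_eq ?_)
    have e1 : δ ^ M * ((2 * ((M : ℝ) + 1) / c) ^ M * (1 + ‖s‖) ^ M) = (1 + ‖k‖) ^ M := by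
      rw [← mul_pow, ← mul_pow]
      congr 1
      rw [hδ, hρ]
      field_simp
    have hδM : δ ^ M ≠ 0 := by positivity
    rw [div_eq_iff hδM]
    calc C * (1 + ‖k‖) ^ D = C * (1 + ‖k‖) ^ M * ((1 + ‖k‖) ^ (n + 1))⁻¹ := by
          rw [hpow]; field_simp
      _ = _ := by rw [← e1]; ring
  · push Not at hcase
    suffices h : ‖(fwdDiff u)^[M] (f s) k‖ ≤ K2 * (1 + ‖s‖) ^ M * ((1 + ‖k‖) ^ (n + 1))⁻¹ by
      refine h.trans ?_
      rw [mul_assoc _ ((1 + ‖s‖) ^ M), mul_assoc _ ((1 + ‖s‖) ^ M)]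
      refine mul_le_mul_of_nonneg_right ?_ hX
      linarith
    refine (fwdDiff_trivial u D M C (f s) hC (H3 s hs) k).trans ?_
    calc C * ((1 + ‖u‖) ^ D + 1) ^ M * (1 + ‖k‖) ^ D
        = C * ((1 + ‖u‖) ^ D + 1) ^ M * (1 + ‖k‖) ^ M * ((1 + ‖k‖) ^ (n + 1))⁻¹ := by
          rw [hpow]; field_simp
      _ ≤ C * ((1 + ‖u‖) ^ D + 1) ^ M * (R' * (1 + ‖s‖)) ^ M * ((1 + ‖k‖) ^ (n + 1))⁻¹ := by
          gcongr
      _ = _ := by rw [mul_pow]; ring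

lemma fwdDiff_differentiable {n : ℕ} (u : Fin n → ℤ) (f : ℂ → (Fin n → ℤ) → ℂ)
    (H1 : ∀ k, Differentiable ℂ fun s => f s k) (j : ℕ) :
    ∀ k, Differentiable ℂ fun s => (fwdDiff u)^[j] (f s) k := by
  induction j with
  | zero => simpa using H1
  | succ j ih =>
    intro k
    simp only [Function.iterate_succ_apply', fwdDiff]
    exact (ih (k + u)).sub (ih k)

lemma abstract_main (n N : ℕ) (u : Fin n → ℤ) (f : ℂ → (Fin n → ℤ) → ℂ) (D : ℕ)
    (C c R σ₀ : ℝ) (hC : 0 ≤ C) (hc : 0 < c) (hR : 0 < R)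
    (H1 : ∀ k, Differentiable ℂ fun s => f s k)
    (H2 : ∀ s : ℂ, σ₀ < s.re → Summable fun k => ‖f s k‖)
    (H3 : ∀ s : ℂ, -(N : ℝ) < s.re → ∀ k, ‖f s k‖ ≤ C * (1 + ‖k‖) ^ D)
    (H4 : ∀ s : ℂ, -(N : ℝ) < s.re → ∀ k : Fin n → ℤ, R * (1 + ‖s‖) < 1 + ‖k‖ →
      ∃ φ : ℂ → ℂ, DifferentiableOn ℂ φ (Metric.ball 0 (c * (1 + ‖k‖) / (1 + ‖s‖))) ∧
        (∀ z ∈ Metric.ball (0 : ℂ) (c * (1 + ‖k‖) / (1 + ‖s‖)), ‖φ z‖ ≤ C * (1 + ‖k‖) ^ D) ∧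
        ∀ m : ℕ, (m : ℂ) ∈ Metric.ball (0 : ℂ) (c * (1 + ‖k‖) / (1 + ‖s‖)) →
          φ m = f s (k + m • u)) :
    ∃ C₀ > (0 : ℝ), ∃ B₀ > (0 : ℝ), ∃ A₀ > (0 : ℝ), ∀ a : Fin n → ℝ,
      0 < distInt (∑ i, a i * (u i : ℝ)) →
        ∃ g₀ : ℂ → ℂ,
          DifferentiableOn ℂ g₀ {s : ℂ | -(N : ℝ) < s.re} ∧
          (∀ s : ℂ, σ₀ < s.re → -(N : ℝ) < s.re →
            HasSum (fun k => f s k * Complex.exp (2 * (Real.pi : ℂ) * Complex.I *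
              ((∑ i, (k i : ℝ) * a i : ℝ) : ℂ))) (g₀ s)) ∧
          (∀ s : ℂ, -(N : ℝ) < s.re →
            ‖g₀ s‖ ≤ C₀ * (1 + ‖s‖) ^ B₀ * distInt (∑ i, a i * (u i : ℝ)) ^ (-A₀)) := by
  obtain ⟨M, hM⟩ : ∃ M, M = D + (n + 1) := ⟨_, rfl⟩
  have hMpos : 0 < (M : ℝ) := by rw [hM]; positivity
  obtain ⟨K, hK, hb⟩ := key_bound n N u f D M C c R hC hc hR hM H3 H4
  have hsum := summable_int_inv n
  set T := ∑' k : Fin n → ℤ, ((1 + ‖k‖) ^ (n + 1))⁻¹ with hT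
  have hT0 : 0 ≤ T := tsum_nonneg fun k => by positivity
  refine ⟨K * T + 1, by positivity, M, hMpos, M, hMpos, fun a ha => ?_⟩
  set t := ∑ i, a i * (u i : ℝ) with ht
  set d := distInt t
  set E : (Fin n → ℤ) → ℂ := fun k => Complex.exp (2 * (Real.pi : ℂ) * Complex.I *
              ((∑ i, (k i : ℝ) * a i : ℝ) : ℂ)) with hE
  set z := Complex.exp (-(2 * (Real.pi : ℂ) * Complex.I * (t : ℂ))) with hz
  have hEz : ∀ k, E k = z * E (k + u) := by
    intro k
    simp only [hE, hz]
    rw [← Complex.exp_add]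
    congr 1
    have : ∑ i, (((k + u) i : ℤ) : ℝ) * a i = ∑ i, (k i : ℝ) * a i + t := by
      rw [ht, ← Finset.sum_add_distrib]
      refine Finset.sum_congr rfl fun i _ => ?_
      rw [Pi.add_apply]; push_cast; ring
    rw [this]; push_cast; ring
  have hEn : ∀ k, ‖E k‖ = 1 := by
    intro k
    simp only [hE]
    rw [Complex.norm_exp]
    simp
  have hdz : d ≤ ‖z - 1‖ := distInt_le_exp t
  have hz1 : z - 1 ≠ 0 := norm_pos_iff.1 (lt_of_lt_of_le ha hdz)
  have hterm : ∀ s : ℂ, -(N : ℝ) < s.re → ∀ k, ‖(fwdDiff u)^[M] (f s) k * E k‖ ≤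
      K * (1 + ‖s‖) ^ M * ((1 + ‖k‖) ^ (n + 1))⁻¹ := by
    intro s hs k
    rw [norm_mul, hEn, mul_one]
    exact hb s hs k
  refine ⟨fun s => ((z - 1) ^ M)⁻¹ * ∑' k, (fwdDiff u)^[M] (f s) k * E k, ?_, ?_, ?_⟩
  · refine DifferentiableOn.const_mul ?_ _
    intro s hs
    have hopen : IsOpen ({s : ℂ | -(N : ℝ) < s.re} ∩ Metric.ball 0 (‖s‖ + 1)) :=
      (isOpen_lt continuous_const Complex.continuous_re).inter Metric.isOpen_ball
    have h := Complex.differentiableOn_tsum_of_summable_norm (F := fun k s => (fwdDiff u)^[M] (f s) k * E k)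
      (U := {s : ℂ | -(N : ℝ) < s.re} ∩ Metric.ball 0 (‖s‖ + 1))
      (hsum.mul_left (K * (1 + (‖s‖ + 1)) ^ M)) ?_ hopen ?_
    · refine (h.differentiableAt (hopen.mem_nhds ⟨hs, ?_⟩)).differentiableWithinAt
      simp
    · intro k
      exact ((fwdDiff_differentiable u f H1 M k).mul_const _).differentiableOn
    · intro k w hw
      refine (hterm w hw.1 k).trans ?_
      have : ‖w‖ ≤ ‖s‖ + 1 := by simpa using (Metric.mem_ball.1 hw.2).le
      gcongr
  · intro s hs hs'
    have hs0 : Summable fun k => f s k * E k := by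
      refine Summable.of_norm ((H2 s hs).congr fun k => ?_)
      rw [norm_mul, hEn, mul_one]
    have h := fwdDiff_hasSum u E z hEz (f s) _ hs0.hasSum M
    beta_reduce
    rw [h.tsum_eq, inv_mul_cancel_left₀ (pow_ne_zero _ hz1)]
    exact hs0.hasSum
  · intro s hs
    have h1 : ‖∑' k, (fwdDiff u)^[M] (f s) k * E k‖ ≤ K * (1 + ‖s‖) ^ M * T := by
      rw [hT, ← tsum_mul_left]
      exact tsum_of_norm_bounded (hsum.mul_left _).hasSum (hterm s hs)
    rw [norm_mul, norm_inv, norm_pow, Real.rpow_neg ha.le, Real.rpow_natCast, Real.rpow_natCast]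
    rw [mul_comm]
    refine mul_le_mul ?_ ?_ (by positivity) (by positivity)
    · refine h1.trans ?_
      have : 0 ≤ (1 + ‖s‖) ^ M := by positivity
      nlinarith
    · gcongr

/-- The squared Euclidean norm of an integer vector. -/
def qf {n : ℕ} (k : Fin n → ℤ) : ℝ := ∑ i, ((k i : ℝ)) ^ 2

/-- Common form of the coefficients of both series. -/
def ff {n : ℕ} (P : MvPolynomial (Fin n) ℂ) (r : ℕ) (ε : ℝ) (s : ℂ) (k : Fin n → ℤ) : ℂ :=
  if qf k + ε = 0 then 0 else
    Gval P r k * Complex.exp (-(s / 2) * (Real.log (qf k + ε) : ℂ))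

lemma qf_nonneg {n : ℕ} (k : Fin n → ℤ) : 0 ≤ qf k := Finset.sum_nonneg fun i _ => by positivity

lemma abs_le_norm {n : ℕ} (k : Fin n → ℤ) (i : Fin n) : |(k i : ℝ)| ≤ ‖k‖ := by
  have := norm_le_pi_norm k i
  rwa [Int.norm_eq_abs] at this

lemma norm_sq_le_qf {n : ℕ} (k : Fin n → ℤ) : ‖k‖ ^ 2 ≤ qf k := by
  have h : ‖k‖ ≤ Real.sqrt (qf k) := by
    rw [pi_norm_le_iff_of_nonneg (Real.sqrt_nonneg _)]
    intro i
    rw [Int.norm_eq_abs]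
    refine Real.abs_le_sqrt ?_
    exact Finset.single_le_sum (f := fun i => ((k i : ℝ)) ^ 2) (fun i _ => by positivity)
      (Finset.mem_univ i)
  calc ‖k‖ ^ 2 ≤ (Real.sqrt (qf k)) ^ 2 := by gcongr
    _ = qf k := Real.sq_sqrt (qf_nonneg k)

lemma qf_le {n : ℕ} (k : Fin n → ℤ) : qf k ≤ n * ‖k‖ ^ 2 := by
  unfold qf
  calc ∑ i, ((k i : ℝ)) ^ 2 ≤ ∑ i : Fin n, ‖k‖ ^ 2 := by
        refine Finset.sum_le_sum fun i _ => ?_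
        rw [← sq_abs]
        gcongr
        exact abs_le_norm k i
    _ = n * ‖k‖ ^ 2 := by simp

lemma one_le_norm {n : ℕ} (k : Fin n → ℤ) (hk : k ≠ 0) : 1 ≤ ‖k‖ := by
  obtain ⟨i, hi⟩ := Function.ne_iff.1 hk
  refine le_trans ?_ (abs_le_norm k i)
  exact_mod_cast Int.one_le_abs hi

lemma eval_bound {n : ℕ} (P : MvPolynomial (Fin n) ℂ) :
    ∃ C : ℝ, 0 ≤ C ∧ ∀ (B : ℝ) (x : Fin n → ℂ), 1 ≤ B → (∀ i, ‖x i‖ ≤ B) →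
      ‖MvPolynomial.eval x P‖ ≤ C * B ^ P.totalDegree := by
  refine ⟨∑ d ∈ P.support, ‖P.coeff d‖, Finset.sum_nonneg fun _ _ => norm_nonneg _, ?_⟩
  intro B x hB hx
  rw [MvPolynomial.eval_eq, Finset.sum_mul]
  refine norm_sum_le_of_le _ fun d hd => ?_
  rw [norm_mul]
  refine mul_le_mul_of_nonneg_left ?_ (norm_nonneg _)
  rw [norm_prod]
  calc ∏ i ∈ d.support, ‖x i ^ d i‖ ≤ ∏ i ∈ d.support, B ^ d i := by
        refine Finset.prod_le_prod (fun _ _ => norm_nonneg _) fun i _ => ?_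
        rw [norm_pow]
        gcongr
        exact hx i
    _ = B ^ (∑ i ∈ d.support, d i) := Finset.prod_pow_eq_pow_sum _ _ _
    _ ≤ B ^ P.totalDegree := pow_le_pow_right₀ hB (MvPolynomial.le_totalDegree hd)

lemma norm_exp_log (w : ℂ) (A : ℝ) (hA : 0 < A) :
    ‖Complex.exp (-(w / 2) * (Real.log A : ℂ))‖ = A ^ (-(w.re / 2)) := by
  rw [Complex.norm_exp, Real.rpow_def_of_pos hA]
  congr 1
  rw [Complex.re_mul_ofReal]
  simp
  ring

lemma Gval_eq {n : ℕ} (P : MvPolynomial (Fin n) ℂ) (r : ℕ) (k : Fin n → ℤ) :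
    Gval P r k = MvPolynomial.eval (fun i => ((k i : ℤ) : ℂ)) P *
      Complex.exp (-((r : ℂ) / 2) * (Real.log (qf k + 1) : ℂ)) := by
  have h : 0 < qf k + 1 := by linarith [qf_nonneg k]
  unfold Gval
  rw [div_eq_mul_inv]
  congr 1
  change (((qf k + 1) ^ ((r : ℝ) / 2) : ℝ) : ℂ)⁻¹ = _
  rw [Real.rpow_def_of_pos h, Complex.ofReal_exp, ← Complex.exp_neg]
  congr 1
  push_cast
  ring

lemma F1Term_eq {n : ℕ} (P : MvPolynomial (Fin n) ℂ) (r : ℕ) (a : Fin n → ℝ) (s : ℂ)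
    (k : Fin n → ℤ) : F1Term P r a s k = ff P r 1 s k *
      Complex.exp (2 * (Real.pi : ℂ) * Complex.I * ((∑ i, (k i : ℝ) * a i : ℝ) : ℂ)) := by
  have h : 0 < qf k + 1 := by linarith [qf_nonneg k]
  unfold F1Term ff
  rw [if_neg h.ne']
  congr 1
  rw [div_eq_mul_inv]
  congr 1
  change (((qf k + 1 : ℝ) : ℂ) ^ (s / 2))⁻¹ = _
  rw [Complex.cpow_def_of_ne_zero (by exact_mod_cast h.ne'), ← Complex.exp_neg,
    ← Complex.ofReal_log h.le]
  congr 1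
  ring

lemma F0Term_eq {n : ℕ} (P : MvPolynomial (Fin n) ℂ) (r : ℕ) (a : Fin n → ℝ) (s : ℂ)
    (k : Fin n → ℤ) : F0Term P r a s k = ff P r 0 s k *
      Complex.exp (2 * (Real.pi : ℂ) * Complex.I * ((∑ i, (k i : ℝ) * a i : ℝ) : ℂ)) := by
  unfold F0Term ff
  by_cases hk : k = 0
  · subst hk
    simp [qf]
  · have h : 0 < qf k := by
      have := norm_sq_le_qf k
      have := one_le_norm k hk
      nlinarith
    rw [if_neg hk, add_zero, if_neg h.ne']
    congr 1
    rw [div_eq_mul_inv]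
    congr 1
    have hz : znorm k = Real.sqrt (qf k) := rfl
    have hz0 : 0 < Real.sqrt (qf k) := Real.sqrt_pos.2 h
    rw [hz, Complex.cpow_def_of_ne_zero (by exact_mod_cast hz0.ne'), ← Complex.exp_neg,
      ← Complex.ofReal_log hz0.le, Real.log_sqrt h.le]
    congr 1
    push_cast
    ring

lemma ff_differentiable {n : ℕ} (P : MvPolynomial (Fin n) ℂ) (r : ℕ) (ε : ℝ) (k : Fin n → ℤ) :
    Differentiable ℂ fun s => ff P r ε s k := by
  unfold ff
  split_ifs
  · fun_prop
  · fun_prop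

lemma one_le_A {n : ℕ} (ε : ℝ) (hε : ε = 0 ∨ ε = 1) (k : Fin n → ℤ) (h : qf k + ε ≠ 0) :
    1 ≤ qf k + ε := by
  rcases hε with rfl | rfl
  · have hk : k ≠ 0 := by
      rintro rfl
      simp [qf] at h
    have := norm_sq_le_qf k
    have := one_le_norm k hk
    nlinarith
  · linarith [qf_nonneg k]

lemma A_le {n : ℕ} (ε : ℝ) (hε : ε = 0 ∨ ε = 1) (k : Fin n → ℤ) :
    qf k + ε ≤ (n + 1) * (1 + ‖k‖) ^ 2 := by
  have h1 := qf_le k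
  have h2 : ε ≤ 1 := by rcases hε with rfl | rfl <;> norm_num
  have h3 := norm_nonneg k
  have h4 : (0 : ℝ) ≤ n := by positivity
  nlinarith [mul_nonneg h4 h3]

lemma pow_A_bound {n : ℕ} (N : ℕ) (ε : ℝ) (hε : ε = 0 ∨ ε = 1) (k : Fin n → ℤ)
    (h : 1 ≤ qf k + ε) (s : ℂ) (hs : -(N : ℝ) < s.re) :
    ‖Complex.exp (-(s / 2) * (Real.log (qf k + ε) : ℂ))‖ ≤
      (n + 1 : ℝ) ^ N * (1 + ‖k‖) ^ (2 * N) := by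
  rw [norm_exp_log _ _ (by linarith)]
  have hN : (0 : ℝ) ≤ N := by positivity
  calc (qf k + ε) ^ (-(s.re / 2)) ≤ (qf k + ε) ^ (N : ℝ) :=
        Real.rpow_le_rpow_of_exponent_le h (by linarith)
    _ = (qf k + ε) ^ N := Real.rpow_natCast _ _
    _ ≤ ((n + 1) * (1 + ‖k‖) ^ 2) ^ N := by
        have := A_le ε hε k
        gcongr
    _ = _ := by rw [mul_pow, pow_mul]

lemma pow_r_bound {n : ℕ} (r : ℕ) (k : Fin n → ℤ) :
    ‖Complex.exp (-((r : ℂ) / 2) * (Real.log (qf k + 1) : ℂ))‖ ≤ 1 := by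
  have h := qf_nonneg k
  rw [norm_exp_log _ _ (by linarith)]
  refine Real.rpow_le_one_of_one_le_of_nonpos (by linarith) ?_
  simp only [Complex.natCast_re, Left.neg_nonpos_iff]
  positivity

lemma ff_summable {n : ℕ} (P : MvPolynomial (Fin n) ℂ) (r : ℕ) (ε : ℝ) (hε : ε = 0 ∨ ε = 1)
    (s : ℂ) (hs : (n : ℝ) + (P.totalDegree : ℝ) - (r : ℝ) < s.re) :
    Summable fun k => ‖ff P r ε s k‖ := by
  obtain ⟨CP, hCP, hP⟩ := eval_bound P
  have h := (summable_int_norm n (P.totalDegree - r - s.re) (by linarith)).mul_left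
    (CP * (n + 1 : ℝ) ^ |s.re|)
  refine Summable.of_norm_bounded_eventually h ?_
  have : ∀ᶠ k : Fin n → ℤ in cofinite, k ≠ 0 := by
    simp
  filter_upwards [this] with k hk
  have hκ := one_le_norm k hk
  have hκ0 : 0 < ‖k‖ := by linarith
  have hq := norm_sq_le_qf k
  have hq2 := qf_le k
  have hε0 : 0 ≤ ε := by rcases hε with rfl | rfl <;> norm_num
  have hε1 : ε ≤ 1 := by rcases hε with rfl | rfl <;> norm_num
  have hA : 0 < qf k + ε := by nlinarith
  rw [norm_norm]
  unfold ff
  rw [if_neg hA.ne', Gval_eq, norm_mul, norm_mul, norm_exp_log _ _ hA,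
    norm_exp_log _ _ (by linarith [qf_nonneg k])]
  have h1 := hP ‖k‖ (fun i => ((k i : ℤ) : ℂ)) hκ (fun i => by
    simpa using abs_le_norm k i)
  have hsq : ∀ x : ℝ, (‖k‖ ^ 2) ^ (-(x / 2)) = ‖k‖ ^ (-x) := by
    intro x
    rw [← Real.rpow_natCast, ← Real.rpow_mul hκ0.le]
    congr 1
    push_cast; ring
  have h2 : (qf k + 1) ^ (-((r : ℂ).re / 2)) ≤ ‖k‖ ^ (-(r : ℝ)) := by
    rw [← hsq, Complex.natCast_re]
    refine Real.rpow_le_rpow_of_nonpos (by positivity) (by linarith) ?_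
    have : (0 : ℝ) ≤ r := by positivity
    linarith
  have hn1 : (1 : ℝ) ≤ n + 1 := by
    have : (0 : ℝ) ≤ n := by positivity
    linarith
  have h3 : (qf k + ε) ^ (-(s.re / 2)) ≤ (n + 1 : ℝ) ^ |s.re| * ‖k‖ ^ (-s.re) := by
    rw [← hsq]
    rcases le_total 0 s.re with h0 | h0
    · calc (qf k + ε) ^ (-(s.re / 2)) ≤ (‖k‖ ^ 2) ^ (-(s.re / 2)) :=
            Real.rpow_le_rpow_of_nonpos (by positivity) (by linarith) (by linarith)
        _ ≤ _ := le_mul_of_one_le_left (by positivity)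
            (Real.one_le_rpow hn1 (abs_nonneg _))
    · calc (qf k + ε) ^ (-(s.re / 2)) ≤ ((n + 1) * ‖k‖ ^ 2) ^ (-(s.re / 2)) := by
            refine Real.rpow_le_rpow hA.le (by nlinarith) (by linarith)
        _ = (n + 1 : ℝ) ^ (-(s.re / 2)) * (‖k‖ ^ 2) ^ (-(s.re / 2)) :=
            Real.mul_rpow (by positivity) (by positivity)
        _ ≤ _ := by
            gcongr
            rw [abs_of_nonpos h0]; linarith
  calc _ ≤ CP * ‖k‖ ^ P.totalDegree * ‖k‖ ^ (-(r : ℝ)) *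
        ((n + 1 : ℝ) ^ |s.re| * ‖k‖ ^ (-s.re)) := by
        have := qf_nonneg k
        gcongr
    _ = CP * (n + 1 : ℝ) ^ |s.re| * (‖k‖ ^ (P.totalDegree : ℝ) * ‖k‖ ^ (-(r : ℝ)) *
        ‖k‖ ^ (-s.re)) := by rw [Real.rpow_natCast]; ring
    _ = _ := by
        rw [← Real.rpow_add hκ0, ← Real.rpow_add hκ0]
        rfl

/-- The inner product of two integer vectors. -/
def bf {n : ℕ} (k u : Fin n → ℤ) : ℝ := ∑ i, (k i : ℝ) * (u i : ℝ)

/-- The increment of the squared norm along the direction `u`. -/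
def hf {n : ℕ} (k u : Fin n → ℤ) (z : ℂ) : ℂ := 2 * z * (bf k u : ℂ) + z ^ 2 * (qf u : ℂ)

lemma qf_shift {n : ℕ} (k u : Fin n → ℤ) (m : ℕ) :
    ((qf (k + m • u) : ℝ) : ℂ) = (qf k : ℂ) + hf k u m := by
  have : qf (k + m • u) = qf k + (2 * m * bf k u + m ^ 2 * qf u) := by
    unfold qf bf
    rw [Finset.mul_sum, Finset.mul_sum, ← Finset.sum_add_distrib, ← Finset.sum_add_distrib]
    refine Finset.sum_congr rfl fun i _ => ?_
    rw [Pi.add_apply, Pi.smul_apply, nsmul_eq_mul]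
    push_cast
    ring
  rw [this, hf]
  push_cast
  ring

lemma hf_differentiable {n : ℕ} (k u : Fin n → ℤ) : Differentiable ℂ (hf k u) := by
  unfold hf
  fun_prop

/-- The holomorphic continuation in the shift parameter of a complex power of `A + h`. -/
def WW (A : ℝ) (w h : ℂ) : ℂ :=
  Complex.exp (-(w / 2) * (Real.log A : ℂ)) * Complex.exp (-(w / 2) * Complex.log (1 + h / A))

lemma WW_bound (A : ℝ) (w h : ℂ) (x : ℝ) (hx : ‖h / A‖ ≤ x) (hx2 : x ≤ 1 / 2) :
    ‖WW A w h‖ ≤ ‖Complex.exp (-(w / 2) * (Real.log A : ℂ))‖ * Real.exp (‖w‖ * x) := by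
  unfold WW
  rw [norm_mul]
  refine mul_le_mul_of_nonneg_left ?_ (norm_nonneg _)
  refine (Complex.norm_exp_le_exp_norm _).trans (Real.exp_le_exp.2 ?_)
  rw [norm_mul, norm_neg, norm_div]
  have h1 := Complex.norm_log_one_add_half_le_self (hx.trans hx2)
  have h2 : ‖Complex.log (1 + h / A)‖ ≤ 3 / 2 * x := h1.trans (by linarith)
  have hx0 : 0 ≤ x := (norm_nonneg _).trans hx
  have h3 : ‖(2 : ℂ)‖ = 2 := by norm_num
  rw [h3]
  have hw := norm_nonneg w
  calc ‖w‖ / 2 * ‖Complex.log (1 + h / A)‖ ≤ ‖w‖ / 2 * (3 / 2 * x) := by gcongr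
    _ ≤ ‖w‖ * x := by nlinarith [mul_nonneg hw hx0]

lemma WW_differentiableAt (A : ℝ) (w : ℂ) (h : ℂ → ℂ) (z : ℂ) (hd : DifferentiableAt ℂ h z)
    (hx : ‖h z / A‖ ≤ 1 / 2) : DifferentiableAt ℂ (fun z => WW A w (h z)) z := by
  unfold WW
  have hs : 1 + h z / A ∈ Complex.slitPlane := by
    refine Complex.mem_slitPlane_of_norm_lt_one ?_
    linarith
  have h1 : DifferentiableAt ℂ (fun z => Complex.log (1 + h z / A)) z :=
    ((hd.div_const _).const_add 1).clog hs
  fun_prop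

lemma WW_eq (A A' : ℝ) (w h : ℂ) (hA : 0 < A) (e : (A' : ℂ) = A + h) (hx : ‖h / A‖ ≤ 1 / 2) :
    0 < A' ∧ WW A w h = Complex.exp (-(w / 2) * (Real.log A' : ℂ)) := by
  have hAc : (A : ℂ) ≠ 0 := by exact_mod_cast hA.ne'
  have h1 : h / A = ((A' / A - 1 : ℝ) : ℂ) := by
    have : h = A' - A := by rw [e]; ring
    rw [this]; push_cast
    field_simp
  rw [h1, Complex.norm_real, Real.norm_eq_abs] at hx
  have h2 := (abs_le.1 hx).1
  have h3 : 0 < A' / A := by linarith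
  have hA' : 0 < A' := by
    have := mul_pos h3 hA
    rwa [div_mul_cancel₀ _ hA.ne'] at this
  refine ⟨hA', ?_⟩
  have h4 : (1 : ℂ) + h / A = ((A' / A : ℝ) : ℂ) := by rw [h1]; push_cast; ring
  unfold WW
  rw [h4, ← Complex.ofReal_log h3.le, ← Complex.exp_add, Real.log_div hA'.ne' hA.ne']
  congr 1
  push_cast
  ring

/-- The `ℓ¹` norm of an integer vector. -/
def l1 {n : ℕ} (u : Fin n → ℤ) : ℝ := ∑ i, |(u i : ℝ)|

lemma l1_nonneg {n : ℕ} (u : Fin n → ℤ) : 0 ≤ l1 u := Finset.sum_nonneg fun _ _ => abs_nonneg _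

lemma abs_le_l1 {n : ℕ} (u : Fin n → ℤ) (i : Fin n) : |(u i : ℝ)| ≤ l1 u :=
  Finset.single_le_sum (f := fun i => |(u i : ℝ)|) (fun _ _ => abs_nonneg _) (Finset.mem_univ i)

lemma bf_le {n : ℕ} (k u : Fin n → ℤ) : |bf k u| ≤ ‖k‖ * l1 u := by
  unfold bf l1
  rw [Finset.mul_sum]
  refine (Finset.abs_sum_le_sum_abs _ _).trans (Finset.sum_le_sum fun i _ => ?_)
  rw [abs_mul]
  gcongr
  exact abs_le_norm k i

lemma qf_le_l1 {n : ℕ} (u : Fin n → ℤ) : qf u ≤ l1 u ^ 2 := by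
  unfold qf
  calc ∑ i, ((u i : ℝ)) ^ 2 ≤ ∑ i, |(u i : ℝ)| * l1 u := by
        refine Finset.sum_le_sum fun i _ => ?_
        rw [← sq_abs, sq]
        gcongr
        exact abs_le_l1 u i
    _ = l1 u ^ 2 := by rw [← Finset.sum_mul, sq]; rfl

lemma hf_bound {n : ℕ} (k u : Fin n → ℤ) (hk : 1 ≤ ‖k‖) (S : ℝ) (hS : 1 ≤ S) (z : ℂ)
    (hz : ‖z‖ ≤ (16 * (l1 u + 1))⁻¹ * (1 + ‖k‖) / S) (A : ℝ) (hA : ‖k‖ ^ 2 ≤ A) :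
    ‖hf k u z / A‖ ≤ 1 / (2 * S) := by
  have hU := l1_nonneg u
  have hS0 : 0 < S := by linarith
  set y := ‖z‖ * l1 u with hy
  have hy0 : 0 ≤ y := by positivity
  have h1 : y ≤ ‖k‖ / (8 * S) := by
    have h2 : ‖z‖ * (l1 u + 1) ≤ (1 + ‖k‖) / (16 * S) := by
      calc ‖z‖ * (l1 u + 1) ≤ (16 * (l1 u + 1))⁻¹ * (1 + ‖k‖) / S * (l1 u + 1) := by gcongr
        _ = _ := by field_simp
    have h3 : (1 + ‖k‖) / (16 * S) ≤ ‖k‖ / (8 * S) := by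
      rw [div_le_div_iff₀ (by positivity) (by positivity)]
      nlinarith
    have h4 := norm_nonneg z
    nlinarith
  have hA0 : 0 < A := by nlinarith
  have h5 : ‖hf k u z‖ ≤ 2 * y * ‖k‖ + y ^ 2 := by
    unfold hf
    refine (norm_add_le _ _).trans ?_
    rw [norm_mul, norm_mul, norm_mul, norm_pow, Complex.norm_real, Complex.norm_real,
      Real.norm_eq_abs, Real.norm_eq_abs, abs_of_nonneg (qf_nonneg u)]
    have h6 := bf_le k u
    have h7 := qf_le_l1 u
    have h8 : ‖(2 : ℂ)‖ = 2 := by norm_num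
    rw [h8]
    calc 2 * ‖z‖ * |bf k u| + ‖z‖ ^ 2 * qf u ≤ 2 * ‖z‖ * (‖k‖ * l1 u) + ‖z‖ ^ 2 * l1 u ^ 2 := by
          gcongr
      _ = _ := by rw [hy]; ring
  rw [norm_div, Complex.norm_real, Real.norm_of_nonneg hA0.le, div_le_iff₀ hA0]
  have h9 : 2 * y * ‖k‖ + y ^ 2 ≤ 2 * (‖k‖ / (8 * S)) * ‖k‖ + (‖k‖ / (8 * S)) ^ 2 := by gcongr
  have h10 : (‖k‖ / (8 * S)) ^ 2 ≤ ‖k‖ ^ 2 / (8 * S) := by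
    rw [div_pow]
    gcongr
    nlinarith
  calc ‖hf k u z‖ ≤ 2 * (‖k‖ / (8 * S)) * ‖k‖ + ‖k‖ ^ 2 / (8 * S) := by linarith
    _ = 3 / (8 * S) * ‖k‖ ^ 2 := by ring
    _ ≤ 1 / (2 * S) * ‖k‖ ^ 2 := by
        gcongr ?_ * _
        rw [div_le_div_iff₀ (by positivity) (by positivity)]
        linarith
    _ ≤ 1 / (2 * S) * A := by gcongr

lemma eval_differentiable {n : ℕ} (P : MvPolynomial (Fin n) ℂ) (k u : Fin n → ℤ) :
    Differentiable ℂ fun z : ℂ => MvPolynomial.eval (fun i => (k i : ℂ) + z * (u i : ℂ)) P := by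
  simp only [MvPolynomial.eval_eq]
  fun_prop

lemma ff_main (n : ℕ) (P : MvPolynomial (Fin n) ℂ) (r : ℕ) (u : Fin n → ℤ) (N : ℕ)
    (ε : ℝ) (hε : ε = 0 ∨ ε = 1) :
    ∃ C₀ > (0 : ℝ), ∃ B₀ > (0 : ℝ), ∃ A₀ > (0 : ℝ), ∀ a : Fin n → ℝ,
      0 < distInt (∑ i, a i * (u i : ℝ)) →
        ∃ g₀ : ℂ → ℂ,
          DifferentiableOn ℂ g₀ {s : ℂ | -(N : ℝ) < s.re} ∧
          (∀ s : ℂ, (n : ℝ) + (P.totalDegree : ℝ) - (r : ℝ) < s.re → -(N : ℝ) < s.re →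
            HasSum (fun k => ff P r ε s k * Complex.exp (2 * (Real.pi : ℂ) * Complex.I *
              ((∑ i, (k i : ℝ) * a i : ℝ) : ℂ))) (g₀ s)) ∧
          (∀ s : ℂ, -(N : ℝ) < s.re →
            ‖g₀ s‖ ≤ C₀ * (1 + ‖s‖) ^ B₀ * distInt (∑ i, a i * (u i : ℝ)) ^ (-A₀)) := by
  obtain ⟨CP, hCP, hP⟩ := eval_bound P
  have hU := l1_nonneg u
  have hε0 : 0 ≤ ε := by rcases hε with rfl | rfl <;> norm_num
  set D := P.totalDegree + 2 * N with hD
  set C := CP * 2 ^ P.totalDegree * Real.exp r * ((n + 1 : ℝ) ^ N * Real.exp 1) with hC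
  have hC0 : 0 ≤ C := by positivity
  refine abstract_main n N u (ff P r ε) D C (16 * (l1 u + 1))⁻¹ 2 _ hC0 (by positivity)
    (by norm_num) (ff_differentiable P r ε) (fun s hs => ff_summable P r ε hε s hs) ?_ ?_
  · intro s hs k
    have hk0 := norm_nonneg k
    unfold ff
    split_ifs with h0
    · rw [norm_zero]; positivity
    · have h1 := pow_A_bound N ε hε k (one_le_A ε hε k h0) s hs
      have h2 := pow_r_bound r k
      have h3 := hP (1 + ‖k‖) (fun i => ((k i : ℤ) : ℂ)) (by linarith) (fun i => by
        have := abs_le_norm k i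
        simp only [Complex.norm_intCast]
        linarith)
      rw [Gval_eq, norm_mul, norm_mul]
      calc _ ≤ CP * (1 + ‖k‖) ^ P.totalDegree * 1 * ((n + 1 : ℝ) ^ N * (1 + ‖k‖) ^ (2 * N)) := by
            gcongr
        _ = CP * 1 * 1 * ((n + 1 : ℝ) ^ N * 1) * (1 + ‖k‖) ^ D := by rw [hD, pow_add]; ring
        _ ≤ C * (1 + ‖k‖) ^ D := by
            rw [hC]
            gcongr
            · exact one_le_pow₀ (by norm_num)
            · exact Real.one_le_exp (by positivity)
            · exact Real.one_le_exp (by norm_num)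
  · intro s hs k hk
    have hs0 := norm_nonneg s
    have hκ : 1 ≤ ‖k‖ := by nlinarith
    have hq := norm_sq_le_qf k
    have hq1 : ‖k‖ ^ 2 ≤ qf k + 1 := by linarith
    have hqε : ‖k‖ ^ 2 ≤ qf k + ε := by linarith
    have hA1 : 1 ≤ qf k + 1 := by linarith [qf_nonneg k]
    have hAε : 1 ≤ qf k + ε := by nlinarith
    set S := 1 + ‖s‖ with hS
    have hS1 : 1 ≤ S := by linarith
    have hS0 : 0 < S := by linarith
    set ρ := (16 * (l1 u + 1))⁻¹ * (1 + ‖k‖) / S with hρ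
    have hb1 : ∀ z ∈ Metric.ball (0 : ℂ) ρ, ‖hf k u z / ((qf k + 1 : ℝ) : ℂ)‖ ≤ 1 / (2 * S) :=
      fun z hz => hf_bound k u hκ S hS1 z (mem_ball_zero_iff.1 hz).le _ hq1
    have hbε : ∀ z ∈ Metric.ball (0 : ℂ) ρ, ‖hf k u z / ((qf k + ε : ℝ) : ℂ)‖ ≤ 1 / (2 * S) :=
      fun z hz => hf_bound k u hκ S hS1 z (mem_ball_zero_iff.1 hz).le _ hqε
    have hhalf : 1 / (2 * S) ≤ 1 / 2 := by
      rw [div_le_div_iff₀ (by positivity) (by positivity)]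
      linarith
    refine ⟨fun z => MvPolynomial.eval (fun i => (k i : ℂ) + z * (u i : ℂ)) P *
      WW (qf k + 1) r (hf k u z) * WW (qf k + ε) s (hf k u z), ?_, ?_, ?_⟩
    · intro z hz
      refine DifferentiableAt.differentiableWithinAt ?_
      exact ((eval_differentiable P k u z).mul
        (WW_differentiableAt _ _ _ _ (hf_differentiable k u z) ((hb1 z hz).trans hhalf))).mul
        (WW_differentiableAt _ _ _ _ (hf_differentiable k u z) ((hbε z hz).trans hhalf))
    · intro z hz
      have hz' : ‖z‖ ≤ ρ := by simpa using (Metric.mem_ball.1 hz).le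
      have h1 := pow_A_bound N ε hε k hAε s hs
      have h2 := pow_r_bound r k
      have h3 := WW_bound _ (r : ℂ) _ (1 / 2) ((hb1 z hz).trans hhalf) le_rfl
      have h4 := WW_bound _ s _ _ (hbε z hz) hhalf
      have h5 : Real.exp (‖(r : ℂ)‖ * (1 / 2)) ≤ Real.exp r := by
        refine Real.exp_le_exp.2 ?_
        rw [Complex.norm_natCast]
        have : (0 : ℝ) ≤ r := by positivity
        linarith
      have h6 : Real.exp (‖s‖ * (1 / (2 * S))) ≤ Real.exp 1 := by
        refine Real.exp_le_exp.2 ?_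
        rw [mul_one_div, div_le_one (by positivity)]
        linarith
      have h7 : ‖MvPolynomial.eval (fun i => (k i : ℂ) + z * (u i : ℂ)) P‖ ≤
          CP * (2 * (1 + ‖k‖)) ^ P.totalDegree := by
        refine hP _ _ (by linarith) fun i => ?_
        refine (norm_add_le _ _).trans ?_
        rw [norm_mul, Complex.norm_intCast, Complex.norm_intCast]
        have h8 := abs_le_norm k i
        have h9 := abs_le_l1 u i
        have h10 : ‖z‖ * |(u i : ℝ)| ≤ 1 + ‖k‖ := by
          calc ‖z‖ * |(u i : ℝ)| ≤ ρ * (l1 u + 1) := by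
                gcongr
                linarith
            _ = (1 + ‖k‖) / (16 * S) := by rw [hρ]; field_simp
            _ ≤ 1 + ‖k‖ := div_le_self (by positivity) (by linarith)
        linarith
      rw [norm_mul, norm_mul]
      calc _ ≤ CP * (2 * (1 + ‖k‖)) ^ P.totalDegree * (1 * Real.exp r) *
            ((n + 1 : ℝ) ^ N * (1 + ‖k‖) ^ (2 * N) * Real.exp 1) := by
            gcongr
            · exact h3.trans (by gcongr)
            · exact h4.trans (by gcongr)
        _ = C * (1 + ‖k‖) ^ D := by rw [hC, hD, pow_add, mul_pow]; ring
    · intro m hm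
      have e1 : ((qf (k + m • u) + 1 : ℝ) : ℂ) = ((qf k + 1 : ℝ) : ℂ) + hf k u m := by
        push_cast; rw [qf_shift]; ring
      have eε : ((qf (k + m • u) + ε : ℝ) : ℂ) = ((qf k + ε : ℝ) : ℂ) + hf k u m := by
        push_cast; rw [qf_shift]; ring
      obtain ⟨_, w1⟩ := WW_eq _ _ (r : ℂ) _ (by linarith) e1 ((hb1 m hm).trans hhalf)
      obtain ⟨hpos, w2⟩ := WW_eq _ _ s _ (by linarith) eε ((hbε m hm).trans hhalf)
      beta_reduce
      rw [w1, w2]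
      unfold ff
      rw [if_neg hpos.ne', Gval_eq]
      congr 4
      ext i
      rw [Pi.add_apply, Pi.smul_apply, nsmul_eq_mul]
      push_cast
      ring

/-- **Lemma.** Let `G = P/(X₁²+⋯+Xₙ²+1)^{r/2}` and `u ∈ ℤⁿ`.  For every `N ∈ ℕ` and
`i ∈ {0,1}` there are positive constants `Cᵢ, Bᵢ, Aᵢ` depending only on `G`, `N`, `u`
(not on `a`!) such that, for every `a ∈ ℝⁿ` with `d(a·u, ℤ) > 0`, the function
`s ↦ Fᵢ(G;a;s)` extends holomorphically to `{Re s > −N}` where it satisfies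
`|Fᵢ(G;a;s)| ≤ Cᵢ (1+|s|)^{Bᵢ} d(a·u, ℤ)^{−Aᵢ}`. -/
theorem Fi_effective_bound (n : ℕ) (hn : 0 < n) (P : MvPolynomial (Fin n) ℂ) (r : ℕ)
    (u : Fin n → ℤ) (N : ℕ) (hN : 0 < N) :
    ∃ C₀ > (0:ℝ), ∃ B₀ > (0:ℝ), ∃ A₀ > (0:ℝ), ∃ C₁ > (0:ℝ), ∃ B₁ > (0:ℝ), ∃ A₁ > (0:ℝ),
      ∀ a : Fin n → ℝ, 0 < distInt (∑ i, a i * (u i : ℝ)) →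
        (∃ g₀ : ℂ → ℂ,
          DifferentiableOn ℂ g₀ {s : ℂ | -(N : ℝ) < s.re} ∧
          (∀ s : ℂ, (n : ℝ) + (P.totalDegree : ℝ) - (r : ℝ) < s.re → -(N : ℝ) < s.re →
            HasSum (F0Term P r a s) (g₀ s)) ∧
          (∀ s : ℂ, -(N : ℝ) < s.re →
            ‖g₀ s‖ ≤ C₀ * (1 + ‖s‖) ^ B₀ * distInt (∑ i, a i * (u i : ℝ)) ^ (-A₀))) ∧
        (∃ g₁ : ℂ → ℂ,
          DifferentiableOn ℂ g₁ {s : ℂ | -(N : ℝ) < s.re} ∧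
          (∀ s : ℂ, (n : ℝ) + (P.totalDegree : ℝ) - (r : ℝ) < s.re → -(N : ℝ) < s.re →
            HasSum (F1Term P r a s) (g₁ s)) ∧
          (∀ s : ℂ, -(N : ℝ) < s.re →
            ‖g₁ s‖ ≤ C₁ * (1 + ‖s‖) ^ B₁ * distInt (∑ i, a i * (u i : ℝ)) ^ (-A₁))) := by
  obtain ⟨C₀, hC₀, B₀, hB₀, A₀, hA₀, h₀⟩ := ff_main n P r u N 0 (Or.inl rfl)
  obtain ⟨C₁, hC₁, B₁, hB₁, A₁, hA₁, h₁⟩ := ff_main n P r u N 1 (Or.inr rfl)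
  refine ⟨C₀, hC₀, B₀, hB₀, A₀, hA₀, C₁, hC₁, B₁, hB₁, A₁, hA₁, fun a ha => ⟨?_, ?_⟩⟩
  · obtain ⟨g, hg1, hg2, hg3⟩ := h₀ a ha
    refine ⟨g, hg1, fun s hs hs' => ?_, hg3⟩
    rw [show F0Term P r a s = _ from funext (F0Term_eq P r a s)]
    exact hg2 s hs hs'
  · obtain ⟨g, hg1, hg2, hg3⟩ := h₁ a ha
    refine ⟨g, hg1, fun s hs hs' => ?_, hg3⟩
    rw [show F1Term P r a s = _ from funext (F1Term_eq P r a s)]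
    exact hg2 s hs hs'

end
end
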